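/- arXiv:1504.03308 — 2 statements merged into one kernel-verified Lean document; each statement's English description precedes it below -/
import Mathlib

section
/- Comparison of two logarithms on ℝ^d: Let ψ and ψ̃ be local logarithms on ℝ^d with a common open domain D. For x with (x,x) ∈ D set S_x := D₂²ψ(x,x) − D₂²ψ̃(x,x), the difference of second derivatives in the second variable on the diagonal. Then each S_x is a symmetric bilinear map ℝ^d × ℝ^d → ℝ^d, and for every x₀ ∈ ℝ^d with (x₀,x₀) ∈ D there exist r > 0 and C < ∞ such that for all x, y ∈ B_r(x₀), |ψ(x,y) − ψ̃(x,y) − (1/2) S_x(ψ(x,y), ψ(x,y))| ≤ C |y − x|³. -/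
noncomputable section

open scoped BigOperators

/-- `ℝ^n` with the Euclidean norm. -/
abbrev Euc (n : ℕ) : Type := EuclideanSpace ℝ (Fin n)

/-- The `i`-th standard basis vector of `ℝ^n`. -/
def eb {n : ℕ} (i : Fin n) : Euc n := EuclideanSpace.single i 1

/-- Tensor product of two Euclidean vectors, realized in `ℝ^{n×m}` with the Euclidean norm. -/
def tensorE {n m : ℕ} (v : Euc n) (w : Euc m) : EuclideanSpace ℝ (Fin n × Fin m) :=
  (EuclideanSpace.equiv (Fin n × Fin m) ℝ).symm fun p => v p.1 * w p.2

/-- Application of the (unique) linear extension of a bilinear map `B` to a tensor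
`X ∈ ℝ^n ⊗ ℝ^m ≅ ℝ^{n × m}`. -/
def tapply {n m : ℕ} {V : Type*} [NormedAddCommGroup V] [NormedSpace ℝ V]
    (B : Euc n → Euc m → V) (X : EuclideanSpace ℝ (Fin n × Fin m)) : V :=
  ∑ q : Fin n × Fin m, X q • B (eb q.1) (eb q.2)
/-- `ψ` is a local logarithm on `ℝ^d` with open domain `D`. -/
structure IsLocalLog {d : ℕ} (D : Set (Euc d × Euc d)) (ψ : Euc d × Euc d → Euc d) : Prop where
  open_dom : IsOpen D
  smooth : ContDiffOn ℝ (⊤ : ℕ∞) ψ D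
  diag_zero : ∀ x : Euc d, (x, x) ∈ D → ψ (x, x) = 0
  diag_deriv : ∀ x : Euc d, (x, x) ∈ D →
    fderiv ℝ (fun w => ψ (x, w)) x = ContinuousLinearMap.id ℝ (Euc d)

/-- Second derivative of `ψ` in the second variable, as a continuous bilinear map. -/
def D2sq {d : ℕ} (ψ : Euc d × Euc d → Euc d) (x y : Euc d) :
    Euc d →L[ℝ] Euc d →L[ℝ] Euc d :=
  fderiv ℝ (fun w => fderiv ℝ (fun w' => ψ (x, w')) w) y

/-!
Write `k = y - x` and `S = D₂²ψ(x, x) - D₂²ψ̃(x, x)`. The second-order Taylor expansions of `ψ` and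
`ψ̃` in the second variable at `(x, x)`, whose remainders are `O(|k|³)` uniformly in the base point
`x`, subtract to `ψ - ψ̃ = ½ S(k, k) + O(|k|³)`. Since `ψ = k + O(|k|²)` and `S` is locally bounded,
`S(k, k)` may be replaced by `S(ψ, ψ)` at the cost of another `O(|k|³)`.
-/

open Asymptotics Filter
open scoped ContDiff Topology

theorem tendsto_diag_fst {X : Type*} [TopologicalSpace X] {x₀ : X} :
    Tendsto (fun p : X × X => (p.1, p.1)) (𝓝 (x₀, x₀)) (𝓝 (x₀, x₀)) :=
  Continuous.tendsto' (by fun_prop) _ _ rfl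

theorem exists_ball_forall_of_eventually_nhds_diag {X : Type*} [PseudoMetricSpace X] {x₀ : X}
    {q : X × X → Prop} (h : ∀ᶠ p in 𝓝 (x₀, x₀), q p) :
    ∃ r > 0, ∀ x ∈ Metric.ball x₀ r, ∀ y ∈ Metric.ball x₀ r, q (x, y) := by
  obtain ⟨r, hr, hq⟩ := Metric.eventually_nhds_iff_ball.1 h
  rw [← ball_prod_same] at hq
  exact ⟨r, hr, fun x hx y hy => hq (x, y) ⟨hx, hy⟩⟩

section FDerivSnd

variable {P E F : Type*} [NormedAddCommGroup E] [NormedSpace ℝ E] [NormedAddCommGroup F]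
  [NormedSpace ℝ F]

/-- The partial derivative `D₂φ` of `φ : P × E → F` in its second variable, as a function of both
variables. As for `fderiv`, its value is `0` where `φ` is not differentiable in that variable. -/
def fderivSnd (φ : P × E → F) (p : P × E) : E →L[ℝ] F :=
  fderiv ℝ (fun w => φ (p.1, w)) p.2

variable [NormedAddCommGroup P] [NormedSpace ℝ P] {φ : P × E → F} {p : P × E}

theorem hasFDerivAt_fderivSnd (h : DifferentiableAt ℝ φ p) :
    HasFDerivAt (fun w => φ (p.1, w)) (fderivSnd φ p) p.2 :=
  (h.comp p.2 (by fun_prop : DifferentiableAt ℝ (fun w : E => (p.1, w)) p.2)).hasFDerivAt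

theorem eventually_hasFDerivAt_fderivSnd (h : ContDiffAt ℝ 1 φ p) :
    ∀ᶠ q in 𝓝 p, HasFDerivAt (fun w => φ (q.1, w)) (fderivSnd φ q) q.2 :=
  (h.eventually (by simp)).mono fun _ hq => hasFDerivAt_fderivSnd (hq.differentiableAt one_ne_zero)

theorem contDiffAt_fderivSnd {m n : ℕ∞ω} (h : ContDiffAt ℝ n φ p) (hmn : m + 1 ≤ n) :
    ContDiffAt ℝ m (fderivSnd φ) p := by
  have slices : ContDiffAt ℝ n (Function.uncurry fun (q : P × E) w => φ (q.1, w)) (p, p.2) :=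
    h.comp (p, p.2) (f := fun r : (P × E) × E => (r.1.1, r.2)) (by fun_prop)
  exact slices.fderiv contDiffAt_snd hmn

end FDerivSnd

section DiagonalTaylor

variable {E F : Type*} [NormedAddCommGroup E] [NormedSpace ℝ E] [NormedAddCommGroup F]
  [NormedSpace ℝ F] {φ : E × E → F} {x₀ : E}

theorem hasFDerivAt_half_smul_bilinear_self {B : E →L[ℝ] E →L[ℝ] F}
    (hB : ∀ v w, B v w = B w v) (v : E) :
    HasFDerivAt (fun w => (1 / 2 : ℝ) • B w w) (B v) v := by
  have product_rule := (B.hasFDerivAt.clm_apply (hasFDerivAt_id v)).const_smul (1 / 2 : ℝ)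
  refine product_rule.congr_fderiv (ContinuousLinearMap.ext fun w => ?_)
  suffices (1 / 2 : ℝ) • (B v w + B w v) = B v w by simpa using this
  rw [hB w v]
  module

/-- The second derivative `D₂²φ(x, x)` of `φ : E × E → F` in its second variable on the diagonal, as
a curried bilinear map. -/
def diagHessian (φ : E × E → F) (x : E) : E →L[ℝ] E →L[ℝ] F :=
  fderivSnd (fderivSnd φ) (x, x)

theorem diagHessian_comm {x : E} (h : ContDiffAt ℝ 2 φ (x, x)) (v w : E) :
    diagHessian φ x v w = diagHessian φ x w v := by
  have slice : ContDiffAt ℝ 2 (fun w => φ (x, w)) x :=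
    h.comp x (contDiffAt_const.prodMk contDiffAt_id)
  exact slice.isSymmSndFDerivAt (by simp) v w

theorem isBigO_one_diagHessian (h : ContDiffAt ℝ 2 φ (x₀, x₀)) :
    (fun p : E × E => diagHessian φ p.1) =O[𝓝 (x₀, x₀)] fun _ => (1 : ℝ) := by
  have deriv_contDiffAt : ContDiffAt ℝ 1 (fderivSnd φ) (x₀, x₀) :=
    contDiffAt_fderivSnd h one_add_one_eq_two.le
  have sndDeriv_continuousAt : ContinuousAt (fderivSnd (fderivSnd φ)) (x₀, x₀) :=
    (contDiffAt_fderivSnd (m := 0) deriv_contDiffAt (by simp)).continuousAt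
  exact (sndDeriv_continuousAt.tendsto.comp tendsto_diag_fst).isBigO_one ℝ

theorem isBigO_sub_diag_of_hasFDerivAt_snd {φ' : E × E → E →L[ℝ] F} {n : ℕ}
    (hφ : ∀ᶠ p in 𝓝 (x₀, x₀), HasFDerivAt (fun w => φ (p.1, w)) (φ' p) p.2)
    (hφ' : φ' =O[𝓝 (x₀, x₀)] fun p => ‖p.2 - p.1‖ ^ n) :
    (fun p => φ p - φ (p.1, p.1)) =O[𝓝 (x₀, x₀)] fun p => ‖p.2 - p.1‖ ^ (n + 1) := by
  obtain ⟨C, hC, bound⟩ := hφ'.exists_nonneg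
  have to_base : Tendsto (fun q : (E × E) × E => (q.1.1, q.2)) (𝓝 (x₀, x₀) ×ˢ 𝓝 x₀)
      (𝓝 (x₀, x₀)) := by
    rw [← nhds_prod_eq]
    exact Continuous.tendsto' (by fun_prop) _ _ rfl
  have on_segment : ∀ᶠ p in 𝓝 (x₀, x₀), ∀ z ∈ segment ℝ p.1 p.2,
      HasFDerivAt (fun w => φ (p.1, w)) (φ' (p.1, z)) z ∧
        ‖φ' (p.1, z)‖ ≤ C * ‖‖z - p.1‖ ^ n‖ :=
    (to_base.eventually (hφ.and bound.bound)).segment_of_prod_nhds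
      (r := fun p z => HasFDerivAt (fun w => φ (p.1, w)) (φ' (p.1, z)) z ∧
        ‖φ' (p.1, z)‖ ≤ C * ‖‖z - p.1‖ ^ n‖)
      (continuous_fst.tendsto _) (continuous_snd.tendsto _)
  refine IsBigO.of_bound C (on_segment.mono fun p hp => ?_)
  have bound_segment : ∀ z ∈ segment ℝ p.1 p.2, ‖φ' (p.1, z)‖ ≤ C * ‖p.2 - p.1‖ ^ n := by
    intro z hz
    calc ‖φ' (p.1, z)‖ ≤ C * ‖‖z - p.1‖ ^ n‖ := (hp z hz).2
      _ = C * ‖z - p.1‖ ^ n := by rw [norm_pow, norm_norm]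
      _ ≤ C * ‖p.2 - p.1‖ ^ n := by gcongr; exact norm_sub_le_of_mem_segment hz
  have mean_value := (convex_segment p.1 p.2).norm_image_sub_le_of_norm_hasFDerivWithin_le
    (fun z hz => (hp z hz).1.hasFDerivWithinAt) bound_segment
    (left_mem_segment ℝ p.1 p.2) (right_mem_segment ℝ p.1 p.2)
  simpa [pow_succ, mul_assoc] using mean_value

theorem isBigO_taylor_zero_diag (h : ContDiffAt ℝ 1 φ (x₀, x₀)) :
    (fun p => φ p - φ (p.1, p.1)) =O[𝓝 (x₀, x₀)] fun p => ‖p.2 - p.1‖ := by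
  have bounded : fderivSnd φ =O[𝓝 (x₀, x₀)] fun p => ‖p.2 - p.1‖ ^ 0 := by
    simpa only [pow_zero] using
      (contDiffAt_fderivSnd (m := 0) h (by simp)).continuousAt.tendsto.isBigO_one ℝ
  simpa only [zero_add, pow_one] using
    isBigO_sub_diag_of_hasFDerivAt_snd (eventually_hasFDerivAt_fderivSnd h) bounded

theorem isBigO_taylor_one_diag (h : ContDiffAt ℝ 2 φ (x₀, x₀)) :
    (fun p => φ p - φ (p.1, p.1) - fderivSnd φ (p.1, p.1) (p.2 - p.1))
      =O[𝓝 (x₀, x₀)] fun p => ‖p.2 - p.1‖ ^ 2 := by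
  have remainder_deriv : ∀ᶠ p in 𝓝 (x₀, x₀), HasFDerivAt
      (fun w => φ (p.1, w) - φ (p.1, p.1) - fderivSnd φ (p.1, p.1) (w - p.1))
      (fderivSnd φ p - fderivSnd φ (p.1, p.1)) p.2 := by
    filter_upwards [eventually_hasFDerivAt_fderivSnd (h.of_le one_le_two)] with p hp
    exact (hp.sub_const _).sub
      ((fderivSnd φ (p.1, p.1)).hasFDerivAt.comp p.2 ((hasFDerivAt_id p.2).sub_const p.1))
  have remainder_deriv_isBigO :
      (fun p => fderivSnd φ p - fderivSnd φ (p.1, p.1)) =O[𝓝 (x₀, x₀)]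
        fun p => ‖p.2 - p.1‖ ^ 1 := by
    simpa only [pow_one] using
      isBigO_taylor_zero_diag (contDiffAt_fderivSnd h one_add_one_eq_two.le)
  exact (isBigO_sub_diag_of_hasFDerivAt_snd
    (φ := fun p => φ p - φ (p.1, p.1) - fderivSnd φ (p.1, p.1) (p.2 - p.1))
    remainder_deriv remainder_deriv_isBigO).congr_left fun p => by simp

theorem isBigO_taylor_two_diag (h : ContDiffAt ℝ 3 φ (x₀, x₀)) :
    (fun p => φ p - φ (p.1, p.1) - fderivSnd φ (p.1, p.1) (p.2 - p.1)
        - (1 / 2 : ℝ) • diagHessian φ p.1 (p.2 - p.1) (p.2 - p.1))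
      =O[𝓝 (x₀, x₀)] fun p => ‖p.2 - p.1‖ ^ 3 := by
  have h₂ : ContDiffAt ℝ 2 φ (x₀, x₀) := h.of_le (by norm_num)
  have remainder_deriv : ∀ᶠ p in 𝓝 (x₀, x₀), HasFDerivAt
      (fun w => φ (p.1, w) - φ (p.1, p.1) - fderivSnd φ (p.1, p.1) (w - p.1)
        - (1 / 2 : ℝ) • diagHessian φ p.1 (w - p.1) (w - p.1))
      (fderivSnd φ p - fderivSnd φ (p.1, p.1) - diagHessian φ p.1 (p.2 - p.1)) p.2 := by
    filter_upwards [eventually_hasFDerivAt_fderivSnd (h₂.of_le one_le_two),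
      tendsto_diag_fst.eventually (h₂.eventually (by simp))] with p hp hp_diag
    have shift := (hasFDerivAt_id (𝕜 := ℝ) p.2).sub_const p.1
    exact ((hp.sub_const _).sub ((fderivSnd φ (p.1, p.1)).hasFDerivAt.comp p.2 shift)).sub
      ((hasFDerivAt_half_smul_bilinear_self (diagHessian_comm hp_diag) _).comp p.2 shift)
  exact (isBigO_sub_diag_of_hasFDerivAt_snd
    (φ := fun p => φ p - φ (p.1, p.1) - fderivSnd φ (p.1, p.1) (p.2 - p.1)
      - (1 / 2 : ℝ) • diagHessian φ p.1 (p.2 - p.1) (p.2 - p.1))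
    remainder_deriv
    (isBigO_taylor_one_diag (contDiffAt_fderivSnd h two_add_one_eq_three.le))).congr_left
      fun p => by simp

end DiagonalTaylor

section BilinearAsymptotics

variable {α E G F : Type*} [NormedAddCommGroup E] [NormedSpace ℝ E] [NormedAddCommGroup G]
  [NormedSpace ℝ G] [NormedAddCommGroup F] [NormedSpace ℝ F] {l : Filter α} {f g : α → ℝ}

theorem isBigO_bilinear_apply {S : α → E →L[ℝ] G →L[ℝ] F} {u : α → E} {v : α → G}
    (hS : S =O[l] fun _ => (1 : ℝ)) (hu : u =O[l] f) (hv : v =O[l] g) :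
    (fun a => S a (u a) (v a)) =O[l] fun a => f a * g a := by
  have opNorm_bound : (fun a => S a (u a) (v a)) =O[l] fun a => ‖S a‖ * ‖u a‖ * ‖v a‖ :=
    IsBigO.of_norm_le fun a => (S a).le_opNorm₂ (u a) (v a)
  have hS_norm : (fun a => ‖S a‖) =O[l] fun _ => (1 : ℝ) :=
    IsBigO.norm_left (E' := E →L[ℝ] G →L[ℝ] F) hS
  have factor_bound : (fun a => ‖S a‖ * ‖u a‖ * ‖v a‖) =O[l] fun a => 1 * f a * g a :=
    (hS_norm.mul hu.norm_left).mul hv.norm_left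
  simpa only [one_mul] using opNorm_bound.trans factor_bound

theorem isBigO_bilinear_self_sub_self {S : α → E →L[ℝ] E →L[ℝ] F} {u v : α → E}
    (hS : S =O[l] fun _ => (1 : ℝ)) (hu : u =O[l] f) (hv : v =O[l] f)
    (huv : (fun a => u a - v a) =O[l] g) :
    (fun a => S a (u a) (u a) - S a (v a) (v a)) =O[l] fun a => f a * g a := by
  have polarization (a : α) : S a (u a) (u a - v a) + S a (u a - v a) (v a) =
      S a (u a) (u a) - S a (v a) (v a) := by
    simp
  have left := isBigO_bilinear_apply hS hu huv
  have right := isBigO_bilinear_apply hS huv hv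
  simp only [mul_comm (g _)] at right
  exact (left.add right).congr_left polarization

end BilinearAsymptotics

/-- A local logarithm of class `C^n` with domain `D` on a real normed space `E`: the notion
`IsLocalLog` with `ℝ^d` replaced by `E` and smoothness by finite regularity. -/
structure IsLocalLogOfClass {E : Type*} [NormedAddCommGroup E] [NormedSpace ℝ E] (n : ℕ∞ω)
    (D : Set (E × E)) (ψ : E × E → E) : Prop where
  isOpen : IsOpen D
  contDiffOn : ContDiffOn ℝ n ψ D
  diag_eq_zero : ∀ x, (x, x) ∈ D → ψ (x, x) = 0
  fderivSnd_diag : ∀ x, (x, x) ∈ D → fderivSnd ψ (x, x) = ContinuousLinearMap.id ℝ E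

theorem IsLocalLog.isLocalLogOfClass {d : ℕ} {D : Set (Euc d × Euc d)} {ψ : Euc d × Euc d → Euc d}
    (hψ : IsLocalLog D ψ) (n : ℕ∞) : IsLocalLogOfClass n D ψ where
  isOpen := hψ.open_dom
  contDiffOn := hψ.smooth.of_le (by exact_mod_cast le_top)
  diag_eq_zero := hψ.diag_zero
  fderivSnd_diag := hψ.diag_deriv

namespace IsLocalLogOfClass

variable {E : Type*} [NormedAddCommGroup E] [NormedSpace ℝ E] {n : ℕ∞ω} {D : Set (E × E)}
  {ψ ψt : E × E → E} {p : E × E} {x₀ : E}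

theorem contDiffAt (hψ : IsLocalLogOfClass n D ψ) (hp : p ∈ D) : ContDiffAt ℝ n ψ p :=
  hψ.contDiffOn.contDiffAt (hψ.isOpen.mem_nhds hp)

theorem of_le {m : ℕ∞ω} (hψ : IsLocalLogOfClass n D ψ) (hmn : m ≤ n) : IsLocalLogOfClass m D ψ :=
  { hψ with contDiffOn := hψ.contDiffOn.of_le hmn }

theorem eventually_diag_mem (hψ : IsLocalLogOfClass n D ψ) (hx₀ : (x₀, x₀) ∈ D) :
    ∀ᶠ p : E × E in 𝓝 (x₀, x₀), (p.1, p.1) ∈ D :=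
  tendsto_diag_fst.eventually (hψ.isOpen.mem_nhds hx₀)

theorem isBigO_self (hψ : IsLocalLogOfClass 1 D ψ) (hx₀ : (x₀, x₀) ∈ D) :
    ψ =O[𝓝 (x₀, x₀)] fun p => ‖p.2 - p.1‖ := by
  refine (isBigO_taylor_zero_diag (hψ.contDiffAt hx₀)).congr' ?_ .rfl
  filter_upwards [hψ.eventually_diag_mem hx₀] with p hp
  rw [hψ.diag_eq_zero _ hp, sub_zero]

theorem isBigO_sub_displacement (hψ : IsLocalLogOfClass 2 D ψ) (hx₀ : (x₀, x₀) ∈ D) :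
    (fun p => ψ p - (p.2 - p.1)) =O[𝓝 (x₀, x₀)] fun p => ‖p.2 - p.1‖ ^ 2 := by
  refine (isBigO_taylor_one_diag (hψ.contDiffAt hx₀)).congr' ?_ .rfl
  filter_upwards [hψ.eventually_diag_mem hx₀] with p hp
  rw [hψ.diag_eq_zero _ hp, hψ.fderivSnd_diag _ hp, sub_zero, ContinuousLinearMap.id_apply]

theorem isBigO_taylor_two (hψ : IsLocalLogOfClass 3 D ψ) (hx₀ : (x₀, x₀) ∈ D) :
    (fun p => ψ p - (p.2 - p.1) - (1 / 2 : ℝ) • diagHessian ψ p.1 (p.2 - p.1) (p.2 - p.1))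
      =O[𝓝 (x₀, x₀)] fun p => ‖p.2 - p.1‖ ^ 3 := by
  refine (isBigO_taylor_two_diag (hψ.contDiffAt hx₀)).congr' ?_ .rfl
  filter_upwards [hψ.eventually_diag_mem hx₀] with p hp
  rw [hψ.diag_eq_zero _ hp, hψ.fderivSnd_diag _ hp, sub_zero, ContinuousLinearMap.id_apply]

theorem isBigO_sub_sub_half_smul_diagHessian (hψ : IsLocalLogOfClass 3 D ψ)
    (hψt : IsLocalLogOfClass 3 D ψt) (hx₀ : (x₀, x₀) ∈ D) :
    (fun p => ψ p - ψt p
        - (1 / 2 : ℝ) • (diagHessian ψ p.1 - diagHessian ψt p.1) (ψ p) (ψ p))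
      =O[𝓝 (x₀, x₀)] fun p => ‖p.2 - p.1‖ ^ 3 := by
  have hψ₂ : IsLocalLogOfClass 2 D ψ := hψ.of_le (by norm_num)
  have hψt₂ : IsLocalLogOfClass 2 D ψt := hψt.of_le (by norm_num)
  have taylor_remainders := (hψ.isBigO_taylor_two hx₀).sub (hψt.isBigO_taylor_two hx₀)
  have hessian_sub_bounded :
      (fun p : E × E => diagHessian ψ p.1 - diagHessian ψt p.1) =O[𝓝 (x₀, x₀)]
        fun _ => (1 : ℝ) :=
    IsBigO.sub (E' := E →L[ℝ] E →L[ℝ] E) (isBigO_one_diagHessian (hψ₂.contDiffAt hx₀))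
      (isBigO_one_diagHessian (hψt₂.contDiffAt hx₀))
  have replace_displacement := isBigO_bilinear_self_sub_self hessian_sub_bounded
    ((hψ₂.of_le one_le_two).isBigO_self hx₀) (isBigO_refl _ _).norm_right
    (hψ₂.isBigO_sub_displacement hx₀)
  simp only [← pow_succ'] at replace_displacement
  refine (taylor_remainders.sub (replace_displacement.const_smul_left (1 / 2 : ℝ))).congr_left
    fun p => ?_
  simp only [_root_.sub_apply, Pi.smul_apply]
  module

end IsLocalLogOfClass

theorem log_comparison_general {E : Type*} [NormedAddCommGroup E] [NormedSpace ℝ E]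
    {D : Set (E × E)} {ψ ψt : E × E → E}
    (hψ : IsLocalLogOfClass 3 D ψ) (hψt : IsLocalLogOfClass 3 D ψt) :
    (∀ x, (x, x) ∈ D → ∀ v w,
      (diagHessian ψ x - diagHessian ψt x) v w = (diagHessian ψ x - diagHessian ψt x) w v) ∧
    ∀ x₀, (x₀, x₀) ∈ D →
      ∃ r C : ℝ, 0 < r ∧ ∀ x ∈ Metric.ball x₀ r, ∀ y ∈ Metric.ball x₀ r,
        ‖ψ (x, y) - ψt (x, y)
            - (1 / 2 : ℝ) • (diagHessian ψ x - diagHessian ψt x) (ψ (x, y)) (ψ (x, y))‖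
          ≤ C * ‖y - x‖ ^ 3 := by
  refine ⟨fun x hx v w => ?_, fun x₀ hx₀ => ?_⟩
  · simp only [_root_.sub_apply]
    rw [diagHessian_comm ((hψ.contDiffAt hx).of_le (by norm_num)) v w,
      diagHessian_comm ((hψt.contDiffAt hx).of_le (by norm_num)) v w]
  · obtain ⟨C, hC⟩ := (hψ.isBigO_sub_sub_half_smul_diagHessian hψt hx₀).bound
    obtain ⟨r, hr, bound⟩ := exists_ball_forall_of_eventually_nhds_diag hC
    exact ⟨r, C, hr, fun x hx y hy => by simpa only [norm_pow, norm_norm] using bound x hx y hy⟩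

/-- **Comparison of two logarithms on `ℝ^d`** (Proposition 3.17 of Driver–Semko).
`S_x := D₂²ψ(x,x) − D₂²ψ̃(x,x)` is symmetric, and
`ψ(x,y) − ψ̃(x,y) = (1/2) S_x(ψ(x,y), ψ(x,y)) + O(|y − x|³)` locally. -/
theorem log_comparison
    {d : ℕ} {D : Set (Euc d × Euc d)} {ψ ψt : Euc d × Euc d → Euc d}
    (hψ : IsLocalLog D ψ) (hψt : IsLocalLog D ψt) :
    (∀ x : Euc d, (x, x) ∈ D → ∀ v w : Euc d,
      (D2sq ψ x x - D2sq ψt x x) v w = (D2sq ψ x x - D2sq ψt x x) w v) ∧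
    ∀ x₀ : Euc d, (x₀, x₀) ∈ D →
      ∃ r C : ℝ, 0 < r ∧ ∀ x ∈ Metric.ball x₀ r, ∀ y ∈ Metric.ball x₀ r,
        ‖ψ (x, y) - ψt (x, y)
            - (1 / 2 : ℝ) • (D2sq ψ x x - D2sq ψt x x) (ψ (x, y)) (ψ (x, y))‖
          ≤ C * ‖y - x‖ ^ 3 :=
  log_comparison_general (hψ.isLocalLogOfClass 3) (hψt.isLocalLogOfClass 3)
end
end

section
/- Almost additivity of the gauge integrand (Euclidean version): Let X = (x, 𝕏) be a weak-geometric p-rough path with control ω on [0,T], let (ψ, U) be a local gauge on ℝ^d with open domain D, let W₀ ⊆ ℝ^d be open convex with W₀ × W₀ ⊆ D, let (y, y†) be an ℝ^d-valued rough path controlled by X on [0,T] with y([0,T]) ⊆ W₀, let V be a Banach space, and let (α, α†) be a U-controlled one-form along y with values in V (with the controlled-one-form bounds holding for all 0 ≤ s ≤ t ≤ T). For m ∈ W₀ define the bilinear map S^𝒢_m : ℝ^d × ℝ^d → ℝ^d by S^𝒢_m(v, w) := ((D₂U)(m,m)⟨v⟩)(w) − (D₂²ψ)(m,m)(v, w),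 and for (s,t) set z̃_{s,t} := α_s( ψ(y_s, y_t) + S^𝒢_{y_s}[(y_s† ⊗ y_s†) 𝕏_{s,t}] ) + α_s†( (I_W ⊗ y_s†) 𝕏_{s,t} ) ∈ V. Then there exists C < ∞ such that |z̃_{s,u} − z̃_{s,t} − z̃_{t,u}| ≤ C ω(s,u)^{3/p} for all 0 ≤ s ≤ t ≤ u ≤ T. -/
noncomputable section

open scoped BigOperators

/-- `ω` is a control on the simplex `{(s,t) : 0 ≤ s ≤ t ≤ T}`. -/
structure IsControl (T : ℝ) (ω : ℝ → ℝ → ℝ) : Prop where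
  cont : ContinuousOn (fun q : ℝ × ℝ => ω q.1 q.2)
    {q : ℝ × ℝ | 0 ≤ q.1 ∧ q.1 ≤ q.2 ∧ q.2 ≤ T}
  nonneg : ∀ ⦃s t : ℝ⦄, 0 ≤ s → s ≤ t → t ≤ T → 0 ≤ ω s t
  zero : ∀ ⦃s : ℝ⦄, 0 ≤ s → s ≤ T → ω s s = 0
  superadditive : ∀ ⦃s t u : ℝ⦄, 0 ≤ s → s ≤ t → t ≤ u → u ≤ T → ω s t + ω t u ≤ ω s u
/-- `(x, XX)` is a `p`-rough path with control `ω` on `[0,T]`. -/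
structure IsRoughPath (T p : ℝ) {k : ℕ} (ω : ℝ → ℝ → ℝ)
    (x : ℝ → Euc k) (XX : ℝ → ℝ → EuclideanSpace ℝ (Fin k × Fin k)) : Prop where
  cont_x : ContinuousOn x (Set.Icc 0 T)
  cont_XX : ContinuousOn (fun q : ℝ × ℝ => XX q.1 q.2)
    {q : ℝ × ℝ | 0 ≤ q.1 ∧ q.1 ≤ q.2 ∧ q.2 ≤ T}
  chen : ∀ ⦃s t u : ℝ⦄, 0 ≤ s → s ≤ t → t ≤ u → u ≤ T →
    XX s u = XX s t + XX t u + tensorE (x t - x s) (x u - x t)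
  bound_x : ∀ ⦃s t : ℝ⦄, 0 ≤ s → s ≤ t → t ≤ T → ‖x t - x s‖ ≤ ω s t ^ (1 / p)
  bound_XX : ∀ ⦃s t : ℝ⦄, 0 ≤ s → s ≤ t → t ≤ T → ‖XX s t‖ ≤ ω s t ^ (2 / p)
/-- The rough path `(x, XX)` is weak-geometric: the symmetric part of `XX s t` is
`(1/2) x_{s,t} ⊗ x_{s,t}`. -/
def IsWeakGeometric (T : ℝ) {k : ℕ} (x : ℝ → Euc k)
    (XX : ℝ → ℝ → EuclideanSpace ℝ (Fin k × Fin k)) : Prop :=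
  ∀ ⦃s t : ℝ⦄, 0 ≤ s → s ≤ t → t ≤ T → ∀ i j : Fin k,
    XX s t (i, j) + XX s t (j, i) = (x t - x s) i * (x t - x s) j
/-- `(y, y')` is a `V`-valued rough path controlled by `X = (x, ·)` (with control `ω`)
on the interval `[a, b]`. -/
def IsCRP (p : ℝ) {k : ℕ} (ω : ℝ → ℝ → ℝ) (x : ℝ → Euc k)
    {V : Type*} [NormedAddCommGroup V] [NormedSpace ℝ V]
    (a b : ℝ) (y : ℝ → V) (y' : ℝ → Euc k →L[ℝ] V) : Prop :=
  ContinuousOn y (Set.Icc a b) ∧ ContinuousOn y' (Set.Icc a b) ∧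
    ∃ C : ℝ, ∀ ⦃s t : ℝ⦄, a ≤ s → s ≤ t → t ≤ b →
      ‖y t - y s - y' s (x t - x s)‖ ≤ C * ω s t ^ (2 / p) ∧
      ‖y' t - y' s‖ ≤ C * ω s t ^ (1 / p)
/-- `(ψ, U)` is a local gauge on `ℝ^d` with open domain `D`. -/
structure IsLocalGauge {d : ℕ} (D : Set (Euc d × Euc d))
    (ψ : Euc d × Euc d → Euc d) (U : Euc d × Euc d → Euc d →L[ℝ] Euc d) : Prop where
  open_dom : IsOpen D
  smooth_psi : ContDiffOn ℝ (⊤ : ℕ∞) ψ D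
  smooth_U : ContDiffOn ℝ (⊤ : ℕ∞) U D
  diag_psi : ∀ x : Euc d, (x, x) ∈ D → ψ (x, x) = 0
  diag_dpsi : ∀ x : Euc d, (x, x) ∈ D →
    fderiv ℝ (fun w => ψ (x, w)) x = ContinuousLinearMap.id ℝ (Euc d)
  diag_U : ∀ x : Euc d, (x, x) ∈ D → U (x, x) = ContinuousLinearMap.id ℝ (Euc d)

/-- `(α, α')` is a `V`-valued `U`-controlled (rough) one-form along `y` on `[0,T]`:
`α'_s ∈ L(W ⊗ ℝ^d, V)` is recorded in curried form, and the second estimate is recorded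
slotwise in the `W`-variable (equivalently, in operator norm). -/
def IsControlledOneForm (T p : ℝ) {k d : ℕ} (ω : ℝ → ℝ → ℝ) (x : ℝ → Euc k)
    (U : Euc d × Euc d → Euc d →L[ℝ] Euc d) (y : ℝ → Euc d)
    {V : Type*} [NormedAddCommGroup V] [NormedSpace ℝ V]
    (α : ℝ → Euc d →L[ℝ] V) (α' : ℝ → Euc k →L[ℝ] Euc d →L[ℝ] V) : Prop :=
  ContinuousOn α (Set.Icc 0 T) ∧ ContinuousOn α' (Set.Icc 0 T) ∧
    ∃ C : ℝ, ∀ ⦃s t : ℝ⦄, 0 ≤ s → s ≤ t → t ≤ T →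
      ‖(α t).comp (U (y t, y s)) - α s - α' s (x t - x s)‖ ≤ C * ω s t ^ (2 / p) ∧
      ∀ w : Euc k,
        ‖(α' t w).comp (U (y t, y s)) - α' s w‖ ≤ C * ‖w‖ * ω s t ^ (1 / p)

/-- The compatibility bilinear form `S^𝒢_m(v, w) = (D₂U)(m,m)⟨v⟩⟨w⟩ − (D₂²ψ)(m,m)(v, w)`
of a gauge `𝒢 = (ψ, U)` on `ℝ^d`. -/
def Sgauge {d : ℕ} (ψ : Euc d × Euc d → Euc d)
    (U : Euc d × Euc d → Euc d →L[ℝ] Euc d) (m v w : Euc d) : Euc d :=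
  fderiv ℝ (fun z => U (m, z)) m v w
    - fderiv ℝ (fun z => fderiv ℝ (fun z' => ψ (m, z')) z) m v w

/-- The local gauge-integrand
`z̃_{s,t} = α_s (ψ(y_s,y_t) + S^𝒢_{y_s}[(y'_s ⊗ y'_s) 𝕏_{s,t}]) + α'_s ((I ⊗ y'_s) 𝕏_{s,t})`. -/
def gaugeIntegrand {k d : ℕ} (ψ : Euc d × Euc d → Euc d)
    (U : Euc d × Euc d → Euc d →L[ℝ] Euc d)
    (XX : ℝ → ℝ → EuclideanSpace ℝ (Fin k × Fin k))
    (y : ℝ → Euc d) (y' : ℝ → Euc k →L[ℝ] Euc d)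
    {V : Type*} [NormedAddCommGroup V] [NormedSpace ℝ V]
    (α : ℝ → Euc d →L[ℝ] V) (α' : ℝ → Euc k →L[ℝ] Euc d →L[ℝ] V)
    (s t : ℝ) : V :=
  α s (ψ (y s, y t) +
      tapply (fun v w => Sgauge ψ U (y s) (y' s v) (y' s w)) (XX s t)) +
    tapply (fun w v => α' s w (y' s v)) (XX s t)

/-!
Everything is measured in the scale `e = ω(s, u)^{1/p}`, with errors uniform over `s ≤ t ≤ u`.
Write `a, b, c` for `y_s, y_t, y_u`, and `A = (D₂U)(a, a)`, `B = (D₂²ψ)(a, a)`. Since `ψ` vanishes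
to first order along the diagonal like `c - a`, its second order expansion and the symmetry of `B`
give `ψ(a, c) - ψ(a, b) - ψ(b, c) = B(b - a, c - b) + O(e³)`, while
`U(b, a) = I - A(b - a) + O(e²)` turns the one-form estimate into
`α_t = α_s + α'_s x_{s,t} + α_s A(b - a) + O(e²)`. Hence the defect of `α_s ψ(y_s, y_t)` is
`-α_s (A - B)(b - a, c - b) - α'_s x_{s,t} (c - b) + O(e³)`. By Chen's identity the terms linear
in `𝕏` contribute `Γ_s(x_{s,t}, x_{t,u}) + O(e³)`, where
`Γ_s(v, w) = α_s S^𝒢_a(y'_s v, y'_s w) + α'_s v (y'_s w)`; as `S^𝒢_a = A - B`, the two cancel to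
third order.

The Taylor expansions are uniform because the path stays in a compact set `K`: near a diagonal
point they follow from the mean value inequality, and away from the diagonal of `K × K` there is
nothing to prove.
-/

open Asymptotics Filter Topology

section Order

variable {ι E F G : Type*} {l : Filter ι} {e : ι → ℝ} {m n : ℕ}
  [NormedAddCommGroup E] [NormedAddCommGroup F] [NormedAddCommGroup G]

/-- `f` has order `n` in the scale `e` along `l`, i.e. `f = O(eⁿ)`; order `0` is boundedness. -/
def HasOrder (l : Filter ι) (e : ι → ℝ) (n : ℕ) (f : ι → E) : Prop :=
  f =O[l] fun i => e i ^ n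

namespace HasOrder

lemma congr {f g : ι → E} (hf : HasOrder l e n f) (h : ∀ i, f i = g i) : HasOrder l e n g :=
  hf.congr_left h

lemma congr' {f g : ι → E} (hf : HasOrder l e n f) (h : f =ᶠ[l] g) : HasOrder l e n g :=
  IsBigO.congr' hf h .rfl

lemma add {f g : ι → E} (hf : HasOrder l e n f) (hg : HasOrder l e n g) :
    HasOrder l e n fun i => f i + g i :=
  IsBigO.add hf hg

lemma neg {f : ι → E} (hf : HasOrder l e n f) : HasOrder l e n fun i => -f i :=
  IsBigO.neg_left hf

lemma sub {f g : ι → E} (hf : HasOrder l e n f) (hg : HasOrder l e n g) :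
    HasOrder l e n fun i => f i - g i :=
  IsBigO.sub hf hg

lemma mono {f : ι → E} (hf : HasOrder l e n f) (he : HasOrder l e 0 e) (hmn : m ≤ n) :
    HasOrder l e m f := by
  obtain ⟨j, rfl⟩ := Nat.exists_eq_add_of_le hmn
  have hej : (fun i => e i ^ j) =O[l] fun _ => (1 : ℝ) := by
    simpa only [HasOrder, pow_zero, one_pow] using he.pow j
  exact hf.trans (by simpa only [pow_add, mul_one] using (isBigO_refl _ l).mul hej)

lemma const (v : E) : HasOrder l e 0 fun _ => v := by
  simpa only [HasOrder, pow_zero] using isBigO_const_const v one_ne_zero l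

lemma of_continuousOn {X : Type*} [TopologicalSpace X] {K : Set X} {f : X → E} {a : ι → X}
    (hf : ContinuousOn f K) (hK : IsCompact K) (ha : ∀ᶠ i in l, a i ∈ K) :
    HasOrder l e 0 fun i => f (a i) := by
  obtain ⟨C, hC⟩ := hK.exists_bound_of_continuousOn hf
  exact IsBigO.of_bound C (ha.mono fun i hi => by simpa using hC _ hi)

variable [NormedSpace ℝ E] [NormedSpace ℝ F] [NormedSpace ℝ G]

lemma clm_apply {A : ι → E →L[ℝ] F} {v : ι → E}
    (hA : HasOrder l e m A) (hv : HasOrder l e n v) :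
    HasOrder l e (m + n) fun i => A i (v i) := by
  simpa only [HasOrder, pow_add] using
    isBoundedBilinearMap_apply.isBigO_comp.trans (hA.norm_left.mul hv.norm_left)

lemma clm_comp {A : ι → F →L[ℝ] G} {B : ι → E →L[ℝ] F}
    (hA : HasOrder l e m A) (hB : HasOrder l e n B) :
    HasOrder l e (m + n) fun i => (A i).comp (B i) := by
  simpa only [HasOrder, pow_add] using
    isBoundedBilinearMap_comp.isBigO_comp.trans (hA.norm_left.mul hB.norm_left)

lemma clm_apply_sub_clm_apply {A A' : ι → E →L[ℝ] F} {v v' : ι → E} {j k : ℕ}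
    (hA : HasOrder l e j A) (hAA' : HasOrder l e m fun i => A' i - A i)
    (hv' : HasOrder l e n v') (hvv' : HasOrder l e k fun i => v' i - v i) (h : j + k = m + n) :
    HasOrder l e (m + n) fun i => A' i (v' i) - A i (v i) :=
  ((hAA'.clm_apply hv').add (h ▸ hA.clm_apply hvv')).congr fun i => by
    simp only [sub_apply, map_sub, sub_add_sub_cancel]

end HasOrder

end Order

section Compactness

variable {E G : Type*} [NormedAddCommGroup E] [NormedAddCommGroup G]

lemma isBigO_principal_of_isCompact {X : Type*} [TopologicalSpace X] {K : Set X}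
    (hK : IsCompact K) {f : X → G} {g : X → ℝ} (h : ∀ q ∈ K, f =O[𝓝[K] q] g) : f =O[𝓟 K] g := by
  refine hK.induction_on (p := fun s => f =O[𝓟 s] g) (by simp)
    (fun s t hst ht => ht.mono (principal_mono.2 hst)) (fun s t hs ht => ?_) fun q hq => ?_
  · simpa only [sup_principal] using hs.sup ht
  · obtain ⟨C, hC⟩ := (h q hq).bound
    exact ⟨_, hC, isBigO_principal.2 ⟨C, fun _ hx => hx⟩⟩

lemma isBigO_principal_prod_of_nhds_diag {K : Set E} (hK : IsCompact K) {R : E × E → G} {n : ℕ}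
    (hR : ContinuousOn R (K ×ˢ K))
    (hdiag : ∀ m ∈ K, R =O[𝓝 (m, m)] fun q => ‖q.2 - q.1‖ ^ n) :
    R =O[𝓟 (K ×ˢ K)] fun q => ‖q.2 - q.1‖ ^ n := by
  refine isBigO_principal_of_isCompact (hK.prod hK) fun q hq => ?_
  obtain heq | hne := eq_or_ne q.2 q.1
  · obtain ⟨a, b⟩ := q
    obtain rfl : b = a := heq
    exact (hdiag b hq.1).mono nhdsWithin_le_nhds
  · have hpos : 0 < ‖q.2 - q.1‖ := norm_sub_pos_iff.2 hne
    have hlim : Tendsto (fun r : E × E => ‖r.2 - r.1‖) (𝓝[K ×ˢ K] q) (𝓝 ‖q.2 - q.1‖) :=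
      (by fun_prop : Continuous fun r : E × E => ‖r.2 - r.1‖).continuousWithinAt
    have hone : (fun _ => (1 : ℝ)) =O[𝓝[K ×ˢ K] q] fun r => ‖r.2 - r.1‖ :=
      (isBigO_const_left_iff_pos_le_norm one_ne_zero).2 ⟨_, half_pos hpos,
        (hlim.eventually_const_le (half_lt_self hpos)).mono fun r hr => by rwa [norm_norm]⟩
    exact ((hR q hq).isBigO_one ℝ).trans (by simpa only [one_pow] using hone.pow n)

lemma HasOrder.of_nhds_diag {ι : Type*} {l : Filter ι} {e : ι → ℝ} {K : Set E} (hK : IsCompact K)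
    {R : E × E → G} {n : ℕ} (hR : ContinuousOn R (K ×ˢ K))
    (hdiag : ∀ m ∈ K, R =O[𝓝 (m, m)] fun q => ‖q.2 - q.1‖ ^ n) {a b : ι → E}
    (ha : ∀ᶠ i in l, a i ∈ K) (hb : ∀ᶠ i in l, b i ∈ K)
    (hab : HasOrder l e 1 fun i => b i - a i) : HasOrder l e n fun i => R (a i, b i) := by
  have hmem : Tendsto (fun i => (a i, b i)) l (𝓟 (K ×ˢ K)) := tendsto_principal.2 (ha.and hb)
  have hpow : (fun i => ‖b i - a i‖ ^ n) =O[l] fun i => e i ^ n := by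
    simpa only [HasOrder, pow_one] using hab.norm_left.pow n
  exact ((isBigO_principal_prod_of_nhds_diag hK hR hdiag).comp_tendsto hmem).trans hpow

end Compactness

section Taylor

variable {E F G : Type*} [NormedAddCommGroup E] [NormedSpace ℝ E]
  [NormedAddCommGroup F] [NormedSpace ℝ F] [NormedAddCommGroup G] [NormedSpace ℝ G]

/-- The partial derivative `D₂f` of a function of two variables with respect to the second one. -/
def sndFDeriv (f : E × F → G) (q : E × F) : F →L[ℝ] G :=
  fderiv ℝ (fun z => f (q.1, z)) q.2

lemma contDiffAt_sndFDeriv {f : E × F → G} {q : E × F} {m n : WithTop ℕ∞}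
    (hf : ContDiffAt ℝ n f q) (hmn : m + 1 ≤ n) : ContDiffAt ℝ m (sndFDeriv f) q := by
  refine ContDiffAt.fderiv (f := fun (r : E × F) z => f (r.1, z)) (n := n) ?_ contDiffAt_snd hmn
  exact hf.comp (q, q.2) (contDiffAt_fst.fst.prodMk contDiffAt_snd)

lemma hasFDerivAt_sndFDeriv {f : E × F → G} {q : E × F} (hf : DifferentiableAt ℝ f q) :
    HasFDerivAt (fun z => f (q.1, z)) (sndFDeriv f q) q.2 :=
  (hf.comp q.2 ((differentiableAt_const q.1).prodMk differentiableAt_id)).hasFDerivAt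

lemma sndFDeriv_sndFDeriv_apply_comm {f : E × F → G} {q : E × F} (hf : ContDiffAt ℝ 2 f q)
    (v w : F) : sndFDeriv (sndFDeriv f) q v w = sndFDeriv (sndFDeriv f) q w v :=
  (hf.comp q.2 (contDiffAt_const.prodMk contDiffAt_id)).isSymmSndFDerivAt
    (f := fun z => f (q.1, z)) (by simp) v w

lemma eventually_hasFDerivAt_sndFDeriv {f : E × F → G} {q : E × F} (hf : ContDiffAt ℝ 1 f q) :
    ∀ᶠ r in 𝓝 q, HasFDerivAt (fun z => f (r.1, z)) (sndFDeriv f r) r.2 :=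
  (hf.eventually (by simp)).mono fun _ hr => hasFDerivAt_sndFDeriv (hr.differentiableAt (by simp))

lemma isBigO_sub_diag_of_hasFDerivAt {h : E × E → G} {h' : E × E → E →L[ℝ] G} {m : E} {n : ℕ}
    (hh : ∀ᶠ q in 𝓝 (m, m), HasFDerivAt (fun z => h (q.1, z)) (h' q) q.2)
    (hh' : h' =O[𝓝 (m, m)] fun q => ‖q.2 - q.1‖ ^ n) :
    (fun q => h q - h (q.1, q.1)) =O[𝓝 (m, m)] fun q => ‖q.2 - q.1‖ ^ (n + 1) := by
  obtain ⟨C, hC, hbound⟩ := hh'.exists_pos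
  obtain ⟨r, hr, hball⟩ := Metric.eventually_nhds_iff_ball.1 (hh.and hbound.bound)
  refine IsBigO.of_bound C (Metric.eventually_nhds_iff_ball.2 ⟨r, hr, ?_⟩)
  rintro ⟨a, b⟩ hab
  have hab' : a ∈ Metric.ball m r ∧ b ∈ Metric.ball m r := by
    rwa [← ball_prod_same, Set.mem_prod] at hab
  have hseg : ∀ z ∈ segment ℝ a b, (a, z) ∈ Metric.ball (m, m) r := fun z hz => by
    rw [← ball_prod_same]
    exact ⟨hab'.1, (convex_ball m r).segment_subset hab'.1 hab'.2 hz⟩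
  have hder : ∀ z ∈ segment ℝ a b, ‖h' (a, z)‖ ≤ C * ‖b - a‖ ^ n := fun z hz => by
    refine (hball _ (hseg z hz)).2.trans ?_
    rw [norm_pow, norm_norm]
    gcongr
    exact norm_sub_le_of_mem_segment hz
  have hmvt := (convex_segment a b).norm_image_sub_le_of_norm_hasFDerivWithin_le
    (f := fun z => h (a, z)) (f' := fun z => h' (a, z))
    (fun z hz => (hball _ (hseg z hz)).1.hasFDerivWithinAt) hder
    (left_mem_segment ℝ a b) (right_mem_segment ℝ a b)
  rwa [norm_pow, norm_norm, pow_succ, ← mul_assoc]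

lemma isBigO_sub_diag {f : E × E → G} {m : E} (hf : ContDiffAt ℝ 1 f (m, m)) :
    (fun q => f q - f (q.1, q.1)) =O[𝓝 (m, m)] fun q => ‖q.2 - q.1‖ ^ 1 := by
  refine isBigO_sub_diag_of_hasFDerivAt (eventually_hasFDerivAt_sndFDeriv hf) ?_
  simpa only [pow_zero] using
    (contDiffAt_sndFDeriv (m := 0) hf (by simp)).continuousAt.isBigO_one ℝ

lemma isBigO_taylor_one {f : E × E → G} {m : E} (hf : ContDiffAt ℝ 2 f (m, m)) :
    (fun q => f q - f (q.1, q.1) - sndFDeriv f (q.1, q.1) (q.2 - q.1))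
      =O[𝓝 (m, m)] fun q => ‖q.2 - q.1‖ ^ 2 := by
  refine (isBigO_sub_diag_of_hasFDerivAt
    (h := fun q => f q - sndFDeriv f (q.1, q.1) (q.2 - q.1)) ?_
    (isBigO_sub_diag (contDiffAt_sndFDeriv hf (by norm_num)))).congr_left fun q => ?_
  · filter_upwards [eventually_hasFDerivAt_sndFDeriv (hf.of_le (by norm_num))] with q hq
    exact hq.sub
      ((sndFDeriv f (q.1, q.1)).hasFDerivAt.comp q.2 ((hasFDerivAt_id q.2).sub_const q.1))
  · simp only [sub_self, map_zero, sub_zero, sub_right_comm]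

lemma hasFDerivAt_half_smul_apply_self {B : E →L[ℝ] E →L[ℝ] G} (hB : ∀ v w, B v w = B w v)
    (a z : E) : HasFDerivAt (fun w => (1 / 2 : ℝ) • B (w - a) (w - a)) (B (z - a)) z := by
  have hid : HasFDerivAt (fun w => w - a) (ContinuousLinearMap.id ℝ E) z :=
    (hasFDerivAt_id z).sub_const a
  refine (((B.hasFDerivAt.comp z hid).clm_apply hid).const_smul (1 / 2 : ℝ)).congr_fderiv ?_
  ext v
  suffices (1 / 2 : ℝ) • (B (z - a) v + B v (z - a)) = B (z - a) v by simpa using this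
  rw [hB v]
  module

lemma isBigO_taylor_two {f : E × E → G} {m : E} (hf : ContDiffAt ℝ 3 f (m, m)) :
    (fun q => f q - f (q.1, q.1) - sndFDeriv f (q.1, q.1) (q.2 - q.1)
      - (1 / 2 : ℝ) • sndFDeriv (sndFDeriv f) (q.1, q.1) (q.2 - q.1) (q.2 - q.1))
      =O[𝓝 (m, m)] fun q => ‖q.2 - q.1‖ ^ 3 := by
  have hf2 : ContDiffAt ℝ 2 f (m, m) := hf.of_le (by norm_num)
  have hdiag : Tendsto (fun q : E × E => (q.1, q.1)) (𝓝 (m, m)) (𝓝 (m, m)) :=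
    (continuous_fst.prodMk continuous_fst).tendsto (m, m)
  refine (isBigO_sub_diag_of_hasFDerivAt
    (h := fun q => f q - sndFDeriv f (q.1, q.1) (q.2 - q.1)
      - (1 / 2 : ℝ) • sndFDeriv (sndFDeriv f) (q.1, q.1) (q.2 - q.1) (q.2 - q.1)) ?_
    (isBigO_taylor_one (contDiffAt_sndFDeriv hf (by norm_num)))).congr_left fun q => ?_
  · filter_upwards [eventually_hasFDerivAt_sndFDeriv (hf.of_le (by norm_num)),
      hdiag.eventually (hf2.eventually (by simp))] with q hq hq'
    exact (hq.sub ((sndFDeriv f (q.1, q.1)).hasFDerivAt.comp q.2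
      ((hasFDerivAt_id q.2).sub_const q.1))).sub
      (hasFDerivAt_half_smul_apply_self (sndFDeriv_sndFDeriv_apply_comm hq') q.1 q.2)
  · simp only [sub_self, map_zero, smul_zero, sub_zero]
    abel

section UniformTaylor

variable {ι : Type*} {l : Filter ι} {e : ι → ℝ} {K : Set E} {a b : ι → E}

lemma HasOrder.comp_sub_comp {g : E → G} (hg : ∀ z ∈ K, ContDiffAt ℝ 1 g z) (hK : IsCompact K)
    (ha : ∀ᶠ i in l, a i ∈ K) (hb : ∀ᶠ i in l, b i ∈ K)
    (hab : HasOrder l e 1 fun i => b i - a i) : HasOrder l e 1 fun i => g (b i) - g (a i) := by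
  have hcont : ContinuousOn g K := fun z hz => (hg z hz).continuousAt.continuousWithinAt
  refine HasOrder.of_nhds_diag (R := fun q => g q.2 - g q.1) hK ?_ (fun m hm => ?_) ha hb hab
  · exact (hcont.comp continuousOn_snd fun q hq => hq.2).sub
      (hcont.comp continuousOn_fst fun q hq => hq.1)
  · exact isBigO_sub_diag (f := fun q => g q.2) ((hg m hm).comp (m, m) contDiffAt_snd)

lemma HasOrder.taylor_one {f : E × E → G} (hf : ∀ q ∈ K ×ˢ K, ContDiffAt ℝ 2 f q)
    (hK : IsCompact K) (ha : ∀ᶠ i in l, a i ∈ K) (hb : ∀ᶠ i in l, b i ∈ K)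
    (hab : HasOrder l e 1 fun i => b i - a i) :
    HasOrder l e 2 fun i =>
      f (a i, b i) - f (a i, a i) - sndFDeriv f (a i, a i) (b i - a i) := by
  have hdiag : ContinuousOn (fun q : E × E => (q.1, q.1)) (K ×ˢ K) := by fun_prop
  have hmaps : Set.MapsTo (fun q : E × E => (q.1, q.1)) (K ×ˢ K) (K ×ˢ K) :=
    fun q hq => ⟨hq.1, hq.1⟩
  have hf₀ : ContinuousOn f (K ×ˢ K) := fun q hq => (hf q hq).continuousAt.continuousWithinAt
  have hf₁ : ContinuousOn (sndFDeriv f) (K ×ˢ K) := fun q hq =>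
    (contDiffAt_sndFDeriv (m := 1) (hf q hq) (by norm_num)).continuousAt.continuousWithinAt
  refine HasOrder.of_nhds_diag
    (R := fun q => f q - f (q.1, q.1) - sndFDeriv f (q.1, q.1) (q.2 - q.1))
    hK ?_ (fun m hm => isBigO_taylor_one (hf _ ⟨hm, hm⟩)) ha hb hab
  exact (hf₀.sub (hf₀.comp hdiag hmaps)).sub ((hf₁.comp hdiag hmaps).clm_apply (by fun_prop))

lemma HasOrder.taylor_two {f : E × E → G} (hf : ∀ q ∈ K ×ˢ K, ContDiffAt ℝ 3 f q)
    (hK : IsCompact K) (ha : ∀ᶠ i in l, a i ∈ K) (hb : ∀ᶠ i in l, b i ∈ K)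
    (hab : HasOrder l e 1 fun i => b i - a i) :
    HasOrder l e 3 fun i =>
      f (a i, b i) - f (a i, a i) - sndFDeriv f (a i, a i) (b i - a i)
        - (1 / 2 : ℝ) • sndFDeriv (sndFDeriv f) (a i, a i) (b i - a i) (b i - a i) := by
  have hdiag : ContinuousOn (fun q : E × E => (q.1, q.1)) (K ×ˢ K) := by fun_prop
  have hmaps : Set.MapsTo (fun q : E × E => (q.1, q.1)) (K ×ˢ K) (K ×ˢ K) :=
    fun q hq => ⟨hq.1, hq.1⟩
  have hdf : ∀ q ∈ K ×ˢ K, ContDiffAt ℝ 2 (sndFDeriv f) q := fun q hq =>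
    contDiffAt_sndFDeriv (hf q hq) (by norm_num)
  have hf₀ : ContinuousOn f (K ×ˢ K) := fun q hq => (hf q hq).continuousAt.continuousWithinAt
  have hf₁ : ContinuousOn (sndFDeriv f) (K ×ˢ K) := fun q hq =>
    (hdf q hq).continuousAt.continuousWithinAt
  have hf₂ : ContinuousOn (sndFDeriv (sndFDeriv f)) (K ×ˢ K) := fun q hq =>
    (contDiffAt_sndFDeriv (m := 1) (hdf q hq) (by norm_num)).continuousAt.continuousWithinAt
  refine HasOrder.of_nhds_diag
    (R := fun q => f q - f (q.1, q.1) - sndFDeriv f (q.1, q.1) (q.2 - q.1)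
      - (1 / 2 : ℝ) • sndFDeriv (sndFDeriv f) (q.1, q.1) (q.2 - q.1) (q.2 - q.1))
    hK ?_ (fun m hm => isBigO_taylor_two (hf _ ⟨hm, hm⟩)) ha hb hab
  exact ((hf₀.sub (hf₀.comp hdiag hmaps)).sub ((hf₁.comp hdiag hmaps).clm_apply (by fun_prop))).sub
    ((((hf₂.comp hdiag hmaps).clm_apply (by fun_prop)).clm_apply (by fun_prop)).const_smul _)

end UniformTaylor

end Taylor

section TensorApplication

variable {n m : ℕ} {V W : Type*} [NormedAddCommGroup V] [NormedSpace ℝ V]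
  [NormedAddCommGroup W] [NormedSpace ℝ W]

lemma map_tapply (L : V →L[ℝ] W) (B : Euc n → Euc m → V) (X : EuclideanSpace ℝ (Fin n × Fin m)) :
    L (tapply B X) = tapply (fun v w => L (B v w)) X := by
  simp only [tapply, map_sum, map_smul]

lemma tapply_add_left (B B' : Euc n → Euc m → V) (X : EuclideanSpace ℝ (Fin n × Fin m)) :
    tapply (fun v w => B v w + B' v w) X = tapply B X + tapply B' X := by
  simp only [tapply, smul_add, Finset.sum_add_distrib]

lemma tapply_sub_left (B B' : Euc n → Euc m → V) (X : EuclideanSpace ℝ (Fin n × Fin m)) :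
    tapply (fun v w => B v w - B' v w) X = tapply B X - tapply B' X := by
  simp only [tapply, smul_sub, Finset.sum_sub_distrib]

lemma tapply_add_right (B : Euc n → Euc m → V) (X Y : EuclideanSpace ℝ (Fin n × Fin m)) :
    tapply B (X + Y) = tapply B X + tapply B Y := by
  simp only [tapply, PiLp.add_apply, add_smul, Finset.sum_add_distrib]

lemma sum_smul_eb (v : Euc n) : ∑ i, v i • eb i = v := by
  simpa [eb] using (EuclideanSpace.basisFun (Fin n) ℝ).sum_repr v

lemma tapply_tensorE (B : Euc n →L[ℝ] Euc m →L[ℝ] V) (v : Euc n) (w : Euc m) :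
    tapply (fun v w => B v w) (tensorE v w) = B v w :=
  calc tapply (fun v w => B v w) (tensorE v w)
      = ∑ i, ∑ j, (v i * w j) • B (eb i) (eb j) := Fintype.sum_prod_type _
    _ = B (∑ i, v i • eb i) (∑ j, w j • eb j) := by
      rw [map_sum B, sum_apply]
      simp only [map_smul, smul_apply, map_sum, smul_smul, mul_comm]
    _ = B v w := by rw [sum_smul_eb, sum_smul_eb]

variable {ι : Type*} {l : Filter ι} {e : ι → ℝ}

protected lemma HasOrder.tapply {j r : ℕ} {B : ι → Euc n → Euc m → V}
    {X : ι → EuclideanSpace ℝ (Fin n × Fin m)} (hB : ∀ v w, HasOrder l e j fun i => B i v w)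
    (hX : HasOrder l e r X) : HasOrder l e (j + r) fun i => tapply (B i) (X i) := by
  refine IsBigO.fun_sum fun q _ => ?_
  have hXq : (fun i => X i q) =O[l] X := .of_bound' (.of_forall fun i => PiLp.norm_apply_le (X i) q)
  simpa only [pow_add, smul_eq_mul, mul_comm] using (hXq.trans hX).smul (hB (eb q.1) (eb q.2))

lemma HasOrder.tapply_chen {Γ Γ' : ι → Euc n →L[ℝ] Euc m →L[ℝ] V}
    {X₁ X₂ X : ι → EuclideanSpace ℝ (Fin n × Fin m)} {v : ι → Euc n} {w : ι → Euc m}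
    (hchen : ∀ᶠ i in l, X i = X₁ i + X₂ i + tensorE (v i) (w i))
    (hΓ : ∀ v w, HasOrder l e 1 fun i => Γ' i v w - Γ i v w) (hX₂ : HasOrder l e 2 X₂) :
    HasOrder l e 3 fun i =>
      tapply (fun v w => Γ i v w) (X i) - tapply (fun v w => Γ i v w) (X₁ i)
        - tapply (fun v w => Γ' i v w) (X₂ i) - Γ i (v i) (w i) := by
  refine (HasOrder.tapply hΓ hX₂).neg.congr' ?_
  filter_upwards [hchen] with i hi
  rw [hi, tapply_add_right, tapply_add_right, tapply_tensorE, tapply_sub_left]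
  abel

end TensorApplication

section Gauge

variable {d : ℕ} {D : Set (Euc d × Euc d)} {ψ : Euc d × Euc d → Euc d}
  {U : Euc d × Euc d → Euc d →L[ℝ] Euc d}

/-- The compatibility form `S^𝒢_m` as a continuous bilinear map; `Sgauge` is its evaluation. -/
def compatibilityForm (ψ : Euc d × Euc d → Euc d) (U : Euc d × Euc d → Euc d →L[ℝ] Euc d)
    (m : Euc d) : Euc d →L[ℝ] Euc d →L[ℝ] Euc d :=
  sndFDeriv U (m, m) - sndFDeriv (sndFDeriv ψ) (m, m)

lemma Sgauge_eq_compatibilityForm (m v w : Euc d) :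
    Sgauge ψ U m v w = compatibilityForm ψ U m v w :=
  rfl

lemma half_smul_cocycle {E F : Type*} [NormedAddCommGroup E] [NormedSpace ℝ E]
    [NormedAddCommGroup F] [NormedSpace ℝ F] (B B' : E →L[ℝ] E →L[ℝ] F)
    (hB : ∀ v w, B v w = B w v) (v w : E) :
    (1 / 2 : ℝ) • B (v + w) (v + w) - (1 / 2 : ℝ) • B v v - (1 / 2 : ℝ) • B' w w - B v w
      = -((1 / 2 : ℝ) • (B' - B) w w) := by
  simp only [map_add, add_apply, sub_apply, hB w v]
  module

namespace IsLocalGauge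

lemma contDiffAt_psi (hG : IsLocalGauge D ψ U) {q : Euc d × Euc d} (hq : q ∈ D) {n : ℕ} :
    ContDiffAt ℝ n ψ q :=
  (hG.smooth_psi.contDiffAt (hG.open_dom.mem_nhds hq)).of_le (by exact_mod_cast le_top)

lemma contDiffAt_U (hG : IsLocalGauge D ψ U) {q : Euc d × Euc d} (hq : q ∈ D) {n : ℕ} :
    ContDiffAt ℝ n U q :=
  (hG.smooth_U.contDiffAt (hG.open_dom.mem_nhds hq)).of_le (by exact_mod_cast le_top)

lemma sndFDeriv_psi_diag (hG : IsLocalGauge D ψ U) {m : Euc d} (hm : (m, m) ∈ D) :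
    sndFDeriv ψ (m, m) = .id ℝ (Euc d) :=
  hG.diag_dpsi m hm

lemma contDiffAt_sndFDeriv_U_diag (hG : IsLocalGauge D ψ U) {m : Euc d} (hm : (m, m) ∈ D) :
    ContDiffAt ℝ 1 (fun z => sndFDeriv U (z, z)) m :=
  (contDiffAt_sndFDeriv (m := 1) (n := (2 : ℕ)) (hG.contDiffAt_U hm) (by norm_num)).comp m
    (f := fun z => (z, z)) (contDiffAt_id.prodMk contDiffAt_id)

lemma contDiffAt_sndFDeriv_sndFDeriv_psi_diag (hG : IsLocalGauge D ψ U) {m : Euc d}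
    (hm : (m, m) ∈ D) : ContDiffAt ℝ 1 (fun z => sndFDeriv (sndFDeriv ψ) (z, z)) m :=
  (contDiffAt_sndFDeriv (m := 1) (contDiffAt_sndFDeriv (m := 2) (n := (3 : ℕ))
    (hG.contDiffAt_psi hm) (by norm_num)) (by norm_num)).comp m
    (f := fun z => (z, z)) (contDiffAt_id.prodMk contDiffAt_id)

lemma contDiffAt_compatibilityForm (hG : IsLocalGauge D ψ U) {m : Euc d} (hm : (m, m) ∈ D) :
    ContDiffAt ℝ 1 (compatibilityForm ψ U) m :=
  (hG.contDiffAt_sndFDeriv_U_diag hm).sub (hG.contDiffAt_sndFDeriv_sndFDeriv_psi_diag hm)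

variable {ι : Type*} {l : Filter ι} {e : ι → ℝ} {K : Set (Euc d)} {a b c : ι → Euc d}

lemma hasOrder_psi_sub (hG : IsLocalGauge D ψ U) (hK : IsCompact K) (hKD : K ×ˢ K ⊆ D)
    (ha : ∀ᶠ i in l, a i ∈ K) (hb : ∀ᶠ i in l, b i ∈ K)
    (hab : HasOrder l e 1 fun i => b i - a i) :
    HasOrder l e 2 fun i => ψ (a i, b i) - (b i - a i) := by
  refine (HasOrder.taylor_one (fun q hq => hG.contDiffAt_psi (hKD hq)) hK ha hb hab).congr' ?_
  filter_upwards [ha] with i hi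
  have hdiag : (a i, a i) ∈ D := hKD ⟨hi, hi⟩
  rw [hG.diag_psi _ hdiag, hG.sndFDeriv_psi_diag hdiag, sub_zero, ContinuousLinearMap.id_apply]

lemma hasOrder_psi_sub_sub (hG : IsLocalGauge D ψ U) (hK : IsCompact K) (hKD : K ×ˢ K ⊆ D)
    (ha : ∀ᶠ i in l, a i ∈ K) (hb : ∀ᶠ i in l, b i ∈ K)
    (hab : HasOrder l e 1 fun i => b i - a i) :
    HasOrder l e 3 fun i => ψ (a i, b i) - (b i - a i)
      - (1 / 2 : ℝ) • sndFDeriv (sndFDeriv ψ) (a i, a i) (b i - a i) (b i - a i) := by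
  refine (HasOrder.taylor_two (fun q hq => hG.contDiffAt_psi (hKD hq)) hK ha hb hab).congr' ?_
  filter_upwards [ha] with i hi
  have hdiag : (a i, a i) ∈ D := hKD ⟨hi, hi⟩
  rw [hG.diag_psi _ hdiag, hG.sndFDeriv_psi_diag hdiag, sub_zero, ContinuousLinearMap.id_apply]

lemma hasOrder_psi_defect (hG : IsLocalGauge D ψ U) (hK : IsCompact K) (hKD : K ×ˢ K ⊆ D)
    (ha : ∀ᶠ i in l, a i ∈ K) (hb : ∀ᶠ i in l, b i ∈ K) (hc : ∀ᶠ i in l, c i ∈ K)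
    (hab : HasOrder l e 1 fun i => b i - a i) (hbc : HasOrder l e 1 fun i => c i - b i) :
    HasOrder l e 3 fun i => ψ (a i, c i) - ψ (a i, b i) - ψ (b i, c i)
      - sndFDeriv (sndFDeriv ψ) (a i, a i) (b i - a i) (c i - b i) := by
  have hac : HasOrder l e 1 fun i => c i - a i :=
    (hab.add hbc).congr fun i => sub_add_sub_cancel' (b i) (a i) (c i)
  have hB : HasOrder l e 1 fun i =>
      sndFDeriv (sndFDeriv ψ) (b i, b i) - sndFDeriv (sndFDeriv ψ) (a i, a i) :=
    HasOrder.comp_sub_comp (g := fun m => sndFDeriv (sndFDeriv ψ) (m, m))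
      (fun m hm => hG.contDiffAt_sndFDeriv_sndFDeriv_psi_diag (hKD ⟨hm, hm⟩)) hK ha hb hab
  have hquad := ((hB.clm_apply hbc).clm_apply hbc).const_smul_left (1 / 2 : ℝ)
  refine ((((hG.hasOrder_psi_sub_sub hK hKD ha hc hac).sub
    (hG.hasOrder_psi_sub_sub hK hKD ha hb hab)).sub
    (hG.hasOrder_psi_sub_sub hK hKD hb hc hbc)).sub hquad).congr' ?_
  filter_upwards [ha] with i hi
  have hdiag : (a i, a i) ∈ D := hKD ⟨hi, hi⟩
  have hsymm := sndFDeriv_sndFDeriv_apply_comm (hG.contDiffAt_psi (n := 2) hdiag)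
  have hcocycle := half_smul_cocycle _ (sndFDeriv (sndFDeriv ψ) (b i, b i)) hsymm
    (b i - a i) (c i - b i)
  rw [sub_add_sub_cancel'] at hcocycle
  rw [Pi.smul_apply, sub_eq_add_neg _ ((1 / 2 : ℝ) • _), ← hcocycle]
  abel

lemma hasOrder_U_sub_id_add (hG : IsLocalGauge D ψ U) (hK : IsCompact K) (hKD : K ×ˢ K ⊆ D)
    (ha : ∀ᶠ i in l, a i ∈ K) (hb : ∀ᶠ i in l, b i ∈ K)
    (hab : HasOrder l e 1 fun i => b i - a i) :
    HasOrder l e 2 fun i => U (b i, a i) - .id ℝ (Euc d) + sndFDeriv U (a i, a i) (b i - a i) := by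
  have hba : HasOrder l e 1 fun i => a i - b i := hab.neg.congr fun i => neg_sub (b i) (a i)
  have hA : HasOrder l e 1 fun i => sndFDeriv U (b i, b i) - sndFDeriv U (a i, a i) :=
    HasOrder.comp_sub_comp (g := fun m => sndFDeriv U (m, m))
      (fun m hm => hG.contDiffAt_sndFDeriv_U_diag (hKD ⟨hm, hm⟩)) hK ha hb hab
  refine ((HasOrder.taylor_one (fun q hq => hG.contDiffAt_U (hKD hq)) hK hb ha hba).sub
    (hA.clm_apply hab)).congr' ?_
  filter_upwards [hb] with i hi
  rw [hG.diag_U _ (hKD ⟨hi, hi⟩), ← neg_sub (b i) (a i), map_neg, sub_apply]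
  abel

lemma hasOrder_U_sub_id (hG : IsLocalGauge D ψ U) (hK : IsCompact K) (hKD : K ×ˢ K ⊆ D)
    (ha : ∀ᶠ i in l, a i ∈ K) (hb : ∀ᶠ i in l, b i ∈ K) (he : HasOrder l e 0 e)
    (hab : HasOrder l e 1 fun i => b i - a i) :
    HasOrder l e 1 fun i => U (b i, a i) - .id ℝ (Euc d) := by
  have hA : HasOrder l e 0 fun i => sndFDeriv U (a i, a i) :=
    HasOrder.of_continuousOn (f := fun m => sndFDeriv U (m, m)) (fun m hm =>
      (hG.contDiffAt_sndFDeriv_U_diag (hKD ⟨hm, hm⟩)).continuousAt.continuousWithinAt) hK ha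
  exact (((hG.hasOrder_U_sub_id_add hK hKD ha hb hab).mono he one_le_two).sub
    (hA.clm_apply hab)).congr fun i => add_sub_cancel_right _ _

end IsLocalGauge

end Gauge

section OneForm

variable {ι : Type*} {l : Filter ι} {e : ι → ℝ}

lemma HasOrder.sub_of_comp_sub {E F : Type*} [NormedAddCommGroup E] [NormedSpace ℝ E]
    [NormedAddCommGroup F] [NormedSpace ℝ F] {φ φ' : ι → E →L[ℝ] F} {P : ι → E →L[ℝ] E}
    (hφ' : HasOrder l e 0 φ') (hP : HasOrder l e 1 fun i => P i - .id ℝ E)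
    (h : HasOrder l e 1 fun i => (φ' i).comp (P i) - φ i) :
    HasOrder l e 1 fun i => φ' i - φ i :=
  (h.sub (hφ'.clm_comp hP)).congr fun i => by
    rw [ContinuousLinearMap.comp_sub, ContinuousLinearMap.comp_id, sub_sub_sub_cancel_left]

variable {d : ℕ} {V : Type*} [NormedAddCommGroup V] [NormedSpace ℝ V]
  {D : Set (Euc d × Euc d)} {ψ : Euc d × Euc d → Euc d} {U : Euc d × Euc d → Euc d →L[ℝ] Euc d}
  {K : Set (Euc d)} {a b c : ι → Euc d} {φ φ' β : ι → Euc d →L[ℝ] V}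

namespace IsLocalGauge

lemma hasOrder_oneForm_sub (hG : IsLocalGauge D ψ U) (hK : IsCompact K) (hKD : K ×ˢ K ⊆ D)
    (ha : ∀ᶠ i in l, a i ∈ K) (hb : ∀ᶠ i in l, b i ∈ K) (he : HasOrder l e 0 e)
    (hab : HasOrder l e 1 fun i => b i - a i) (hφ' : HasOrder l e 0 φ')
    (hβ : HasOrder l e 1 β)
    (hφφ' : HasOrder l e 2 fun i => (φ' i).comp (U (b i, a i)) - φ i - β i) :
    HasOrder l e 2 fun i =>
      φ' i - φ i - β i - (φ i).comp (sndFDeriv U (a i, a i) (b i - a i)) := by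
  have hP := hG.hasOrder_U_sub_id hK hKD ha hb he hab
  have hA : HasOrder l e 1 fun i => sndFDeriv U (a i, a i) (b i - a i) :=
    (hP.sub ((hG.hasOrder_U_sub_id_add hK hKD ha hb hab).mono he one_le_two)).neg.congr
      fun i => by abel
  have hincr : HasOrder l e 1 fun i => φ' i - φ i :=
    hφ'.sub_of_comp_sub hP (((hφφ'.mono he one_le_two).add hβ).congr fun i => sub_add_cancel _ _)
  refine ((hφφ'.sub (hφ'.clm_comp (hG.hasOrder_U_sub_id_add hK hKD ha hb hab))).add
    (hincr.clm_comp hA)).congr fun i => ?_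
  simp only [ContinuousLinearMap.comp_add, ContinuousLinearMap.comp_sub,
    ContinuousLinearMap.sub_comp, ContinuousLinearMap.comp_id]
  abel

lemma hasOrder_displacement_defect (hG : IsLocalGauge D ψ U) (hK : IsCompact K)
    (hKD : K ×ˢ K ⊆ D) (ha : ∀ᶠ i in l, a i ∈ K) (hb : ∀ᶠ i in l, b i ∈ K)
    (hc : ∀ᶠ i in l, c i ∈ K) (he : HasOrder l e 0 e) (hab : HasOrder l e 1 fun i => b i - a i)
    (hbc : HasOrder l e 1 fun i => c i - b i) (hφ : HasOrder l e 0 φ) (hφ' : HasOrder l e 0 φ')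
    (hβ : HasOrder l e 1 β)
    (hφφ' : HasOrder l e 2 fun i => (φ' i).comp (U (b i, a i)) - φ i - β i) :
    HasOrder l e 3 fun i => φ i (ψ (a i, c i)) - φ i (ψ (a i, b i)) - φ' i (ψ (b i, c i))
      + (φ i (compatibilityForm ψ U (a i) (b i - a i) (c i - b i)) + β i (c i - b i)) := by
  have hψ₂ := hG.hasOrder_psi_sub hK hKD hb hc hbc
  have hψ : HasOrder l e 1 fun i => ψ (b i, c i) :=
    ((hψ₂.mono he one_le_two).add hbc).congr fun i => sub_add_cancel _ _
  have hA : HasOrder l e 0 fun i => sndFDeriv U (a i, a i) :=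
    HasOrder.of_continuousOn (f := fun m => sndFDeriv U (m, m)) (fun m hm =>
      (hG.contDiffAt_sndFDeriv_U_diag (hKD ⟨hm, hm⟩)).continuousAt.continuousWithinAt) hK ha
  have hpsi_defect := hφ.clm_apply (hG.hasOrder_psi_defect hK hKD ha hb hc hab hbc)
  have htransition :=
    (hG.hasOrder_oneForm_sub hK hKD ha hb he hab hφ' hβ hφφ').clm_apply hψ
  have hreplace := (hβ.clm_apply hψ₂).add (hφ.clm_apply ((hA.clm_apply hab).clm_apply hψ₂))
  refine ((hpsi_defect.sub htransition).sub hreplace).congr fun i => ?_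
  simp only [compatibilityForm, map_sub, sub_apply, ContinuousLinearMap.comp_apply]
  abel

end IsLocalGauge

end OneForm

section SecondOrder

variable {E F V : Type*} [NormedAddCommGroup E] [NormedSpace ℝ E] [NormedAddCommGroup F]
  [NormedSpace ℝ F] [NormedAddCommGroup V] [NormedSpace ℝ V]

/-- The bilinear coefficient `Γ(v, w) = φ(S(Yv, Yw)) + β(v)(Yw)` through which the second level of
the driver enters the integrand of a one-form `(φ, β)` along a path with derivative `Y`. -/
def levelTwoCoeff (S : F →L[ℝ] F →L[ℝ] F) (φ : F →L[ℝ] V) (β : E →L[ℝ] F →L[ℝ] V)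
    (Y : E →L[ℝ] F) : E →L[ℝ] E →L[ℝ] V :=
  (ContinuousLinearMap.compL ℝ E F V φ).comp (S.bilinearComp Y Y) + β.bilinearComp (.id ℝ E) Y

lemma levelTwoCoeff_apply (S : F →L[ℝ] F →L[ℝ] F) (φ : F →L[ℝ] V) (β : E →L[ℝ] F →L[ℝ] V)
    (Y : E →L[ℝ] F) (v w : E) :
    levelTwoCoeff S φ β Y v w = φ (S (Y v) (Y w)) + β v (Y w) :=
  rfl

variable {ι : Type*} {l : Filter ι} {e : ι → ℝ} {S S' : ι → F →L[ℝ] F →L[ℝ] F}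
  {φ φ' : ι → F →L[ℝ] V} {β β' : ι → E →L[ℝ] F →L[ℝ] V} {Y Y' : ι → E →L[ℝ] F}

namespace HasOrder

lemma levelTwoCoeff_sub (hS : HasOrder l e 0 S) (hS' : HasOrder l e 0 S') (hφ : HasOrder l e 0 φ)
    (hβ : HasOrder l e 0 β) (hY : HasOrder l e 0 Y) (hY' : HasOrder l e 0 Y')
    (hSS' : HasOrder l e 1 fun i => S' i - S i) (hφφ' : HasOrder l e 1 fun i => φ' i - φ i)
    (hββ' : ∀ v, HasOrder l e 1 fun i => β' i v - β i v)
    (hYY' : HasOrder l e 1 fun i => Y' i - Y i) (v w : E) :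
    HasOrder l e 1 fun i =>
      levelTwoCoeff (S' i) (φ' i) (β' i) (Y' i) v w -
        levelTwoCoeff (S i) (φ i) (β i) (Y i) v w := by
  have hYv (u : E) : HasOrder l e 1 fun i => Y' i u - Y i u := hYY'.clm_apply (.const u)
  have hY'w : HasOrder l e 0 fun i => Y' i w := hY'.clm_apply (.const w)
  have hSv := hS.clm_apply_sub_clm_apply hSS' (hY'.clm_apply (.const v)) (hYv v) rfl
  have hSvw := (hS.clm_apply (hY.clm_apply (.const v))).clm_apply_sub_clm_apply hSv hY'w (hYv w) rfl
  have hφS := hφ.clm_apply_sub_clm_apply hφφ'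
    ((hS'.clm_apply (hY'.clm_apply (.const v))).clm_apply hY'w) hSvw rfl
  have hβY := (hβ.clm_apply (.const v)).clm_apply_sub_clm_apply (hββ' v) hY'w (hYv w) rfl
  exact (hφS.add hβY).congr fun i => by
    rw [levelTwoCoeff_apply, levelTwoCoeff_apply, add_sub_add_comm]

lemma sub_levelTwoCoeff {δ₁ δ₂ : ι → F} {v w : ι → E} (hS : HasOrder l e 0 S)
    (hφ : HasOrder l e 0 φ) (hβ : HasOrder l e 0 β) (hY : HasOrder l e 0 Y)
    (hv : HasOrder l e 1 v) (hδ₂ : HasOrder l e 1 δ₂)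
    (hδ₁v : HasOrder l e 2 fun i => δ₁ i - Y i (v i))
    (hδ₂w : HasOrder l e 2 fun i => δ₂ i - Y i (w i)) :
    HasOrder l e 3 fun i => φ i (S i (δ₁ i) (δ₂ i)) + β i (v i) (δ₂ i)
      - levelTwoCoeff (S i) (φ i) (β i) (Y i) (v i) (w i) := by
  have hSδ₁ : HasOrder l e 2 fun i => S i (δ₁ i) - S i (Y i (v i)) :=
    (hS.clm_apply hδ₁v).congr fun i => map_sub _ _ _
  have hSδ := (hS.clm_apply (hY.clm_apply hv)).clm_apply_sub_clm_apply hSδ₁ hδ₂ hδ₂w rfl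
  have hβδ := (hβ.clm_apply hv).clm_apply hδ₂w
  exact ((hφ.clm_apply hSδ).add hβδ).congr fun i => by
    rw [levelTwoCoeff_apply, map_sub, map_sub, add_sub_add_comm]

end HasOrder

end SecondOrder

section Control

/-- The triples `(s, t, u)` with `0 ≤ s ≤ t ≤ u ≤ T`. -/
def orderedTriples (T : ℝ) : Set (ℝ × ℝ × ℝ) :=
  {τ | 0 ≤ τ.1 ∧ τ.1 ≤ τ.2.1 ∧ τ.2.1 ≤ τ.2.2 ∧ τ.2.2 ≤ T}

/-- The scale `ω(s, u)^{1/p}` attached to a triple `(s, t, u)`. -/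
def outerScale (p : ℝ) (ω : ℝ → ℝ → ℝ) (τ : ℝ × ℝ × ℝ) : ℝ :=
  ω τ.1 τ.2.2 ^ (1 / p)

/-- The functions `a` and `b` choose a subinterval `[a τ, b τ]` of `[s, u]` for each ordered triple
`τ = (s, t, u)`, so that estimates along `(s, t)` and `(t, u)` can be stated at once. -/
def IsSubinterval (T : ℝ) (a b : ℝ × ℝ × ℝ → ℝ) : Prop :=
  ∀ τ ∈ orderedTriples T, τ.1 ≤ a τ ∧ a τ ≤ b τ ∧ b τ ≤ τ.2.2

variable {T p : ℝ} {ω : ℝ → ℝ → ℝ} {a b : ℝ × ℝ × ℝ → ℝ}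

namespace IsSubinterval

lemma fst_snd (T : ℝ) : IsSubinterval T (fun τ => τ.1) fun τ => τ.2.1 :=
  fun _ hτ => ⟨le_rfl, hτ.2.1, hτ.2.2.1⟩

lemma snd_trd (T : ℝ) : IsSubinterval T (fun τ => τ.2.1) fun τ => τ.2.2 :=
  fun _ hτ => ⟨hτ.2.1, hτ.2.2.1, le_rfl⟩

lemma left_mem_Icc (h : IsSubinterval T a b) : ∀ᶠ τ in 𝓟 (orderedTriples T), a τ ∈ Set.Icc 0 T :=
  eventually_principal.2 fun τ hτ =>
    ⟨hτ.1.trans (h τ hτ).1, (h τ hτ).2.1.trans ((h τ hτ).2.2.trans hτ.2.2.2)⟩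

lemma right_mem_Icc (h : IsSubinterval T a b) : ∀ᶠ τ in 𝓟 (orderedTriples T), b τ ∈ Set.Icc 0 T :=
  eventually_principal.2 fun τ hτ =>
    ⟨hτ.1.trans ((h τ hτ).1.trans (h τ hτ).2.1), (h τ hτ).2.2.trans hτ.2.2.2⟩

end IsSubinterval

namespace IsControl

lemma mono (hω : IsControl T ω) {r s t u : ℝ} (hr : 0 ≤ r) (hrs : r ≤ s) (hst : s ≤ t)
    (htu : t ≤ u) (hu : u ≤ T) : ω s t ≤ ω r u := by
  have hrs₀ : 0 ≤ ω r s := hω.nonneg hr hrs (hst.trans (htu.trans hu))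
  have htu₀ : 0 ≤ ω t u := hω.nonneg (hr.trans (hrs.trans hst)) htu hu
  have hrst : ω r s + ω s t ≤ ω r t := hω.superadditive hr hrs hst (htu.trans hu)
  have hrtu : ω r t + ω t u ≤ ω r u := hω.superadditive hr (hrs.trans hst) htu hu
  linarith

lemma outer_nonneg (hω : IsControl T ω) {τ : ℝ × ℝ × ℝ} (hτ : τ ∈ orderedTriples T) :
    0 ≤ ω τ.1 τ.2.2 :=
  hω.nonneg hτ.1 (hτ.2.1.trans hτ.2.2.1) hτ.2.2.2

lemma outerScale_pow (hω : IsControl T ω) {τ : ℝ × ℝ × ℝ} (hτ : τ ∈ orderedTriples T) (n : ℕ) :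
    outerScale p ω τ ^ n = ω τ.1 τ.2.2 ^ ((n : ℝ) / p) := by
  rw [outerScale, ← Real.rpow_mul_natCast (hω.outer_nonneg hτ), one_div_mul_eq_div]

lemma hasOrder_of_norm_le {E : Type*} [NormedAddCommGroup E] {f : ℝ → ℝ → E} {C : ℝ} {n : ℕ}
    (hω : IsControl T ω) (hp : 0 < p)
    (hf : ∀ ⦃s t : ℝ⦄, 0 ≤ s → s ≤ t → t ≤ T → ‖f s t‖ ≤ C * ω s t ^ ((n : ℝ) / p))
    (hab : IsSubinterval T a b) :
    HasOrder (𝓟 (orderedTriples T)) (outerScale p ω) n fun τ => f (a τ) (b τ) := by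
  refine IsBigO.of_bound |C| (eventually_principal.2 fun τ hτ => ?_)
  obtain ⟨hsa, hle, hbu⟩ := hab τ hτ
  have h₀ : 0 ≤ ω (a τ) (b τ) := hω.nonneg (hτ.1.trans hsa) hle (hbu.trans hτ.2.2.2)
  rw [hω.outerScale_pow hτ, Real.norm_of_nonneg (Real.rpow_nonneg (hω.outer_nonneg hτ) _)]
  calc ‖f (a τ) (b τ)‖
      ≤ C * ω (a τ) (b τ) ^ ((n : ℝ) / p) := hf (hτ.1.trans hsa) hle (hbu.trans hτ.2.2.2)
    _ ≤ |C| * ω τ.1 τ.2.2 ^ ((n : ℝ) / p) := by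
      gcongr
      · exact le_abs_self C
      · exact hω.mono hτ.1 hsa hle hbu hτ.2.2.2

lemma hasOrder_outerScale (hω : IsControl T ω) (hp : 0 < p) :
    HasOrder (𝓟 (orderedTriples T)) (outerScale p ω) 0 (outerScale p ω) := by
  refine IsBigO.of_bound (ω 0 T ^ (1 / p)) (eventually_principal.2 fun τ hτ => ?_)
  rw [pow_zero, norm_one, mul_one, outerScale,
    Real.norm_of_nonneg (Real.rpow_nonneg (hω.outer_nonneg hτ) _)]
  gcongr
  · exact hω.outer_nonneg hτ
  · exact hω.mono le_rfl hτ.1 (hτ.2.1.trans hτ.2.2.1) hτ.2.2.2 le_rfl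

end IsControl

variable {k : ℕ} {x : ℝ → Euc k}

namespace IsRoughPath

variable {XX : ℝ → ℝ → EuclideanSpace ℝ (Fin k × Fin k)}

lemma hasOrder_path (hX : IsRoughPath T p ω x XX) (hω : IsControl T ω) (hp : 0 < p)
    (hab : IsSubinterval T a b) :
    HasOrder (𝓟 (orderedTriples T)) (outerScale p ω) 1 fun τ => x (b τ) - x (a τ) :=
  hω.hasOrder_of_norm_le (C := 1) (f := fun s t => x t - x s) hp
    (fun s t hs hst ht => by simpa using hX.bound_x hs hst ht) hab

lemma hasOrder_levelTwo (hX : IsRoughPath T p ω x XX) (hω : IsControl T ω) (hp : 0 < p)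
    (hab : IsSubinterval T a b) :
    HasOrder (𝓟 (orderedTriples T)) (outerScale p ω) 2 fun τ => XX (a τ) (b τ) :=
  hω.hasOrder_of_norm_le (C := 1) hp
    (fun s t hs hst ht => by simpa using hX.bound_XX hs hst ht) hab

end IsRoughPath

namespace IsCRP

variable {E : Type*} [NormedAddCommGroup E] [NormedSpace ℝ E] {y : ℝ → E}
  {y' : ℝ → Euc k →L[ℝ] E}

lemma hasOrder_derivative (hy : IsCRP p ω x 0 T y y')
    (ha : ∀ᶠ τ in 𝓟 (orderedTriples T), a τ ∈ Set.Icc 0 T) :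
    HasOrder (𝓟 (orderedTriples T)) (outerScale p ω) 0 fun τ => y' (a τ) :=
  HasOrder.of_continuousOn hy.2.1 isCompact_Icc ha

lemma hasOrder_remainder (hy : IsCRP p ω x 0 T y y') (hω : IsControl T ω) (hp : 0 < p)
    (hab : IsSubinterval T a b) :
    HasOrder (𝓟 (orderedTriples T)) (outerScale p ω) 2
      fun τ => y (b τ) - y (a τ) - y' (a τ) (x (b τ) - x (a τ)) := by
  obtain ⟨-, -, C, hC⟩ := hy
  exact hω.hasOrder_of_norm_le (f := fun s t => y t - y s - y' s (x t - x s)) hp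
    (fun s t hs hst ht => (hC hs hst ht).1) hab

lemma hasOrder_derivative_sub (hy : IsCRP p ω x 0 T y y') (hω : IsControl T ω) (hp : 0 < p)
    (hab : IsSubinterval T a b) :
    HasOrder (𝓟 (orderedTriples T)) (outerScale p ω) 1 fun τ => y' (b τ) - y' (a τ) := by
  obtain ⟨-, -, C, hC⟩ := hy
  exact hω.hasOrder_of_norm_le (f := fun s t => y' t - y' s) hp
    (fun s t hs hst ht => by simpa using (hC hs hst ht).2) hab

lemma hasOrder_increment {XX : ℝ → ℝ → EuclideanSpace ℝ (Fin k × Fin k)}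
    (hy : IsCRP p ω x 0 T y y') (hX : IsRoughPath T p ω x XX) (hω : IsControl T ω) (hp : 0 < p)
    (hab : IsSubinterval T a b) :
    HasOrder (𝓟 (orderedTriples T)) (outerScale p ω) 1 fun τ => y (b τ) - y (a τ) :=
  (((hy.hasOrder_remainder hω hp hab).mono (hω.hasOrder_outerScale hp) one_le_two).add
    ((hy.hasOrder_derivative hab.left_mem_Icc).clm_apply (hX.hasOrder_path hω hp hab))).congr
    fun _ => sub_add_cancel _ _

end IsCRP

namespace IsControlledOneForm

variable {d : ℕ} {V : Type*} [NormedAddCommGroup V] [NormedSpace ℝ V]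
  {U : Euc d × Euc d → Euc d →L[ℝ] Euc d} {y : ℝ → Euc d}
  {α : ℝ → Euc d →L[ℝ] V} {α' : ℝ → Euc k →L[ℝ] Euc d →L[ℝ] V}

lemma hasOrder_remainder (hα : IsControlledOneForm T p ω x U y α α') (hω : IsControl T ω)
    (hp : 0 < p) (hab : IsSubinterval T a b) :
    HasOrder (𝓟 (orderedTriples T)) (outerScale p ω) 2 fun τ =>
      (α (b τ)).comp (U (y (b τ), y (a τ))) - α (a τ) - α' (a τ) (x (b τ) - x (a τ)) := by
  obtain ⟨-, -, C, hC⟩ := hα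
  exact hω.hasOrder_of_norm_le
    (f := fun s t => (α t).comp (U (y t, y s)) - α s - α' s (x t - x s)) hp
    (fun s t hs hst ht => (hC hs hst ht).1) hab

lemma hasOrder_derivative_comp_sub (hα : IsControlledOneForm T p ω x U y α α')
    (hω : IsControl T ω) (hp : 0 < p) (hab : IsSubinterval T a b) (w : Euc k) :
    HasOrder (𝓟 (orderedTriples T)) (outerScale p ω) 1 fun τ =>
      (α' (b τ) w).comp (U (y (b τ), y (a τ))) - α' (a τ) w := by
  obtain ⟨-, -, C, hC⟩ := hα
  exact hω.hasOrder_of_norm_le (f := fun s t => (α' t w).comp (U (y t, y s)) - α' s w) hp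
    (fun s t hs hst ht => by simpa using (hC hs hst ht).2 w) hab

lemma hasOrder_zero (hα : IsControlledOneForm T p ω x U y α α')
    (ha : ∀ᶠ τ in 𝓟 (orderedTriples T), a τ ∈ Set.Icc 0 T) :
    HasOrder (𝓟 (orderedTriples T)) (outerScale p ω) 0 fun τ => α (a τ) :=
  HasOrder.of_continuousOn hα.1 isCompact_Icc ha

lemma hasOrder_derivative (hα : IsControlledOneForm T p ω x U y α α')
    (ha : ∀ᶠ τ in 𝓟 (orderedTriples T), a τ ∈ Set.Icc 0 T) :
    HasOrder (𝓟 (orderedTriples T)) (outerScale p ω) 0 fun τ => α' (a τ) :=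
  HasOrder.of_continuousOn hα.2.1 isCompact_Icc ha

end IsControlledOneForm

end Control

section GaugeIntegrand

variable {T p : ℝ} {k d : ℕ} {ω : ℝ → ℝ → ℝ} {x : ℝ → Euc k}
  {XX : ℝ → ℝ → EuclideanSpace ℝ (Fin k × Fin k)} {D : Set (Euc d × Euc d)}
  {ψ : Euc d × Euc d → Euc d} {U : Euc d × Euc d → Euc d →L[ℝ] Euc d}
  {y : ℝ → Euc d} {y' : ℝ → Euc k →L[ℝ] Euc d}
  {V : Type*} [NormedAddCommGroup V] [NormedSpace ℝ V]
  {α : ℝ → Euc d →L[ℝ] V} {α' : ℝ → Euc k →L[ℝ] Euc d →L[ℝ] V}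

/-- The coefficient of `𝕏_{s,t}` in the gauge integrand: the one-form `(α_s, α'_s)` composed with
the compatibility form at `y_s`. -/
def gaugeLevelTwo (ψ : Euc d × Euc d → Euc d) (U : Euc d × Euc d → Euc d →L[ℝ] Euc d)
    (y : ℝ → Euc d) (y' : ℝ → Euc k →L[ℝ] Euc d) (α : ℝ → Euc d →L[ℝ] V)
    (α' : ℝ → Euc k →L[ℝ] Euc d →L[ℝ] V) (s : ℝ) : Euc k →L[ℝ] Euc k →L[ℝ] V :=
  levelTwoCoeff (compatibilityForm ψ U (y s)) (α s) (α' s) (y' s)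

lemma gaugeIntegrand_eq_add_tapply (s t : ℝ) :
    gaugeIntegrand ψ U XX y y' α α' s t =
      α s (ψ (y s, y t)) + tapply (fun v w => gaugeLevelTwo ψ U y y' α α' s v w) (XX s t) := by
  simp only [gaugeIntegrand, gaugeLevelTwo, levelTwoCoeff_apply, Sgauge_eq_compatibilityForm,
    map_add, map_tapply, tapply_add_left, add_assoc]

lemma IsLocalGauge.hasOrder_gaugeLevelTwo_sub (hG : IsLocalGauge D ψ U) (hω : IsControl T ω)
    (hp : 0 < p) (hX : IsRoughPath T p ω x XX) (hy : IsCRP p ω x 0 T y y')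
    (hyD : (y '' Set.Icc 0 T) ×ˢ (y '' Set.Icc 0 T) ⊆ D)
    (hα : IsControlledOneForm T p ω x U y α α') {a b : ℝ × ℝ × ℝ → ℝ} (hab : IsSubinterval T a b)
    (v w : Euc k) :
    HasOrder (𝓟 (orderedTriples T)) (outerScale p ω) 1 fun τ =>
      gaugeLevelTwo ψ U y y' α α' (b τ) v w - gaugeLevelTwo ψ U y y' α α' (a τ) v w := by
  have hK : IsCompact (y '' Set.Icc 0 T) := isCompact_Icc.image_of_continuousOn hy.1
  have ha := hab.left_mem_Icc
  have hb := hab.right_mem_Icc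
  have haK := ha.mono fun _ => Set.mem_image_of_mem y
  have hbK := hb.mono fun _ => Set.mem_image_of_mem y
  have he := hω.hasOrder_outerScale hp
  have hδ := hy.hasOrder_increment hX hω hp hab
  have hU := hG.hasOrder_U_sub_id hK hyD haK hbK he hδ
  have hS := fun m hm => hG.contDiffAt_compatibilityForm (m := m) (hyD ⟨hm, hm⟩)
  have hS₀ : ContinuousOn (compatibilityForm ψ U) (y '' Set.Icc 0 T) := fun m hm =>
    (hS m hm).continuousAt.continuousWithinAt
  have hαα : HasOrder (𝓟 (orderedTriples T)) (outerScale p ω) 1 fun τ => α (b τ) - α (a τ) :=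
    (hα.hasOrder_zero hb).sub_of_comp_sub hU
      ((((hα.hasOrder_remainder hω hp hab).mono he one_le_two).add
        ((hα.hasOrder_derivative ha).clm_apply (hX.hasOrder_path hω hp hab))).congr
        fun _ => sub_add_cancel _ _)
  have hαα' (w : Euc k) := ((hα.hasOrder_derivative hb).clm_apply (.const w)).sub_of_comp_sub hU
    (hα.hasOrder_derivative_comp_sub hω hp hab w)
  exact HasOrder.levelTwoCoeff_sub (.of_continuousOn hS₀ hK haK) (.of_continuousOn hS₀ hK hbK)
    (hα.hasOrder_zero ha) (hα.hasOrder_derivative ha) (hy.hasOrder_derivative ha)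
    (hy.hasOrder_derivative hb) (HasOrder.comp_sub_comp hS hK haK hbK hδ) hαα hαα'
    (hy.hasOrder_derivative_sub hω hp hab) v w

lemma IsLocalGauge.hasOrder_sub_gaugeLevelTwo (hG : IsLocalGauge D ψ U) (hω : IsControl T ω)
    (hp : 0 < p) (hX : IsRoughPath T p ω x XX) (hy : IsCRP p ω x 0 T y y')
    (hyD : (y '' Set.Icc 0 T) ×ˢ (y '' Set.Icc 0 T) ⊆ D)
    (hα : IsControlledOneForm T p ω x U y α α') :
    HasOrder (𝓟 (orderedTriples T)) (outerScale p ω) 3 fun (s, t, u) =>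
      α s (compatibilityForm ψ U (y s) (y t - y s) (y u - y t)) + α' s (x t - x s) (y u - y t)
        - gaugeLevelTwo ψ U y y' α α' s (x t - x s) (x u - x t) := by
  have hst := IsSubinterval.fst_snd T
  have htu := IsSubinterval.snd_trd T
  have hs := hst.left_mem_Icc
  have hS₀ : ContinuousOn (compatibilityForm ψ U) (y '' Set.Icc 0 T) := fun m hm =>
    (hG.contDiffAt_compatibilityForm (hyD ⟨hm, hm⟩)).continuousAt.continuousWithinAt
  have hδ₂ : HasOrder (𝓟 (orderedTriples T)) (outerScale p ω) 2 fun τ =>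
      y τ.2.2 - y τ.2.1 - y' τ.1 (x τ.2.2 - x τ.2.1) :=
    ((hy.hasOrder_remainder hω hp htu).add ((hy.hasOrder_derivative_sub hω hp hst).clm_apply
      (hX.hasOrder_path hω hp htu))).congr fun τ => by rw [sub_apply, sub_add_sub_cancel]
  exact HasOrder.sub_levelTwoCoeff
    (.of_continuousOn hS₀ (isCompact_Icc.image_of_continuousOn hy.1)
      (hs.mono fun _ => Set.mem_image_of_mem y))
    (hα.hasOrder_zero hs) (hα.hasOrder_derivative hs) (hy.hasOrder_derivative hs)
    (hX.hasOrder_path hω hp hst) (hy.hasOrder_increment hX hω hp htu)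
    (hy.hasOrder_remainder hω hp hst) hδ₂

lemma IsLocalGauge.hasOrder_displacement_defect_path (hG : IsLocalGauge D ψ U)
    (hω : IsControl T ω) (hp : 0 < p) (hX : IsRoughPath T p ω x XX) (hy : IsCRP p ω x 0 T y y')
    (hyD : (y '' Set.Icc 0 T) ×ˢ (y '' Set.Icc 0 T) ⊆ D)
    (hα : IsControlledOneForm T p ω x U y α α') :
    HasOrder (𝓟 (orderedTriples T)) (outerScale p ω) 3 fun (s, t, u) =>
      α s (ψ (y s, y u)) - α s (ψ (y s, y t)) - α t (ψ (y t, y u))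
        + (α s (compatibilityForm ψ U (y s) (y t - y s) (y u - y t))
          + α' s (x t - x s) (y u - y t)) := by
  have hst := IsSubinterval.fst_snd T
  have htu := IsSubinterval.snd_trd T
  exact hG.hasOrder_displacement_defect (isCompact_Icc.image_of_continuousOn hy.1) hyD
    (hst.left_mem_Icc.mono fun _ => Set.mem_image_of_mem y)
    (hst.right_mem_Icc.mono fun _ => Set.mem_image_of_mem y)
    (htu.right_mem_Icc.mono fun _ => Set.mem_image_of_mem y) (hω.hasOrder_outerScale hp)
    (hy.hasOrder_increment hX hω hp hst) (hy.hasOrder_increment hX hω hp htu)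
    (hα.hasOrder_zero hst.left_mem_Icc) (hα.hasOrder_zero hst.right_mem_Icc)
    ((hα.hasOrder_derivative hst.left_mem_Icc).clm_apply (hX.hasOrder_path hω hp hst))
    (hα.hasOrder_remainder hω hp hst)

theorem gaugeIntegrand_almost_additive_general (hp : 0 < p) (hω : IsControl T ω)
    (hX : IsRoughPath T p ω x XX) (hG : IsLocalGauge D ψ U) (hy : IsCRP p ω x 0 T y y')
    (hyD : (y '' Set.Icc 0 T) ×ˢ (y '' Set.Icc 0 T) ⊆ D)
    (hα : IsControlledOneForm T p ω x U y α α') :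
    ∃ C : ℝ, ∀ ⦃s t u : ℝ⦄, 0 ≤ s → s ≤ t → t ≤ u → u ≤ T →
      ‖gaugeIntegrand ψ U XX y y' α α' s u -
          gaugeIntegrand ψ U XX y y' α α' s t -
          gaugeIntegrand ψ U XX y y' α α' t u‖
        ≤ C * ω s u ^ (3 / p) := by
  have hdisplacement := hG.hasOrder_displacement_defect_path hω hp hX hy hyD hα
  have hlevelTwo := hG.hasOrder_sub_gaugeLevelTwo hω hp hX hy hyD hα
  have hchen : HasOrder (𝓟 (orderedTriples T)) (outerScale p ω) 3 _ :=
    HasOrder.tapply_chen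
      (eventually_principal.2 fun τ hτ => hX.chen hτ.1 hτ.2.1 hτ.2.2.1 hτ.2.2.2)
      (hG.hasOrder_gaugeLevelTwo_sub hω hp hX hy hyD hα (.fst_snd T))
      (hX.hasOrder_levelTwo hω hp (.snd_trd T))
  have hdefect : HasOrder (𝓟 (orderedTriples T)) (outerScale p ω) 3 fun (s, t, u) =>
      gaugeIntegrand ψ U XX y y' α α' s u - gaugeIntegrand ψ U XX y y' α α' s t
        - gaugeIntegrand ψ U XX y y' α α' t u :=
    ((hdisplacement.add hchen).sub hlevelTwo).congr fun τ => by
      simp only [gaugeIntegrand_eq_add_tapply]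
      abel
  obtain ⟨C, hC⟩ := isBigO_principal.1 hdefect
  refine ⟨C, fun s t u hs hst htu hu => ?_⟩
  have hτ : (s, t, u) ∈ orderedTriples T := ⟨hs, hst, htu, hu⟩
  have hscale : ‖outerScale p ω (s, t, u) ^ 3‖ = ω s u ^ (3 / p) := by
    rw [hω.outerScale_pow hτ 3, Real.norm_of_nonneg (Real.rpow_nonneg (hω.outer_nonneg hτ) _)]
    norm_num
  exact hscale ▸ hC _ hτ

end GaugeIntegrand

/-- **Almost additivity of the gauge integrand** (Euclidean version of Theorem 3.26 of
Driver–Semko). -/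
theorem gaugeIntegrand_almost_additive
    {T p : ℝ} (hT : 0 < T) (hp1 : 1 ≤ p) (hp3 : p < 3) {k : ℕ} (hk : 1 ≤ k)
    {ω : ℝ → ℝ → ℝ} (hω : IsControl T ω)
    {x : ℝ → Euc k} {XX : ℝ → ℝ → EuclideanSpace ℝ (Fin k × Fin k)}
    (hX : IsRoughPath T p ω x XX) (hgeo : IsWeakGeometric T x XX)
    {d : ℕ} {D : Set (Euc d × Euc d)}
    {ψ : Euc d × Euc d → Euc d} {U : Euc d × Euc d → Euc d →L[ℝ] Euc d}
    (hG : IsLocalGauge D ψ U)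
    {W₀ : Set (Euc d)} (hW₀open : IsOpen W₀) (hW₀conv : Convex ℝ W₀)
    (hWD : W₀ ×ˢ W₀ ⊆ D)
    {y : ℝ → Euc d} {y' : ℝ → Euc k →L[ℝ] Euc d}
    (hy : IsCRP p ω x 0 T y y') (hyW : ∀ s ∈ Set.Icc (0 : ℝ) T, y s ∈ W₀)
    {V : Type*} [NormedAddCommGroup V] [NormedSpace ℝ V]
    {α : ℝ → Euc d →L[ℝ] V} {α' : ℝ → Euc k →L[ℝ] Euc d →L[ℝ] V}
    (hα : IsControlledOneForm T p ω x U y α α') :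
    ∃ C : ℝ, ∀ ⦃s t u : ℝ⦄, 0 ≤ s → s ≤ t → t ≤ u → u ≤ T →
      ‖gaugeIntegrand ψ U XX y y' α α' s u -
          gaugeIntegrand ψ U XX y y' α α' s t -
          gaugeIntegrand ψ U XX y y' α α' t u‖
        ≤ C * ω s u ^ (3 / p) := by
  have hyD : (y '' Set.Icc 0 T) ×ˢ (y '' Set.Icc 0 T) ⊆ D :=
    (Set.prod_mono (Set.image_subset_iff.2 hyW) (Set.image_subset_iff.2 hyW)).trans hWD
  exact gaugeIntegrand_almost_additive_general (zero_lt_one.trans_le hp1) hω hX hG hy hyD hα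
end
end
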